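/- arXiv:1505.00150 — 2 statements merged into one kernel-verified Lean document; each statement's English description precedes it below -/
import Mathlib

section
/- Let T>0, E a separable Banach space, V a Banach space densely and continuously embedded in E, and {A(t)}_{t∈[0,T]} a family of linear operators on E satisfying (Hyp'1) with constant ω>0 and (Hyp2)–(Hyp4). For μ∈[0,1] set A^{(μ)}(t) := −μI + (1−μ)A(t) and let {R^{(μ,λ)}(t,s)}_{0≤s≤t≤T} be the evolution system corresponding to {λA^{(μ)}(t)}_{t∈[0,T]} for λ>0. Let cl(A^{(μ0)}_0) denote the closure of the operator (1/T)∫_0^T A^{(μ0)}(τ)dτ (defined on V) and S_{cl(A^{(μ0)}_0)} the C0 semigroup it generates. If (k_n) is a sequence of positive integers and (λ_n)⊂(0,∞), (μ_n)⊂[0,1] satisfy k_n→∞, k_nλ_n→ε for some ε>0, and μ_n→μ0, then for every x∈E, λ_n (I + R^{(μ_n,λ_n)}(T,0) + … + R^{(μ_n,λ_n)}(T,0)^{k_n−1}) x → (1/T) ∫_0^{εT} S_{cl(A^{(μ0)}_0)}(τ) x dτ as n→∞. -/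
open Filter Topology Set MeasureTheory

noncomputable section

variable {E : Type*} [NormedAddCommGroup E] [NormedSpace ℝ E]

/-- A C₀ semigroup of bounded linear operators on `E`. -/
structure IsC0Semigroup (S : ℝ → E →L[ℝ] E) : Prop where
  map_zero : S 0 = 1
  map_add : ∀ ⦃t s : ℝ⦄, 0 ≤ t → 0 ≤ s → S (t + s) = (S t).comp (S s)
  strong_cont : ∀ x : E, ContinuousOn (fun t => S t x) (Ici (0 : ℝ))

/-- `y` is the limit of `t⁻¹ • (S t x - x)` as `t → 0⁺`. -/
def GenLimitAt (S : ℝ → E →L[ℝ] E) (x y : E) : Prop :=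
  Tendsto (fun t : ℝ => t⁻¹ • (S t x - x)) (𝓝[>] (0 : ℝ)) (𝓝 y)

/-- The (unbounded) operator with domain `D` and action `A` is the generator of `S`. -/
def IsGeneratorOf (D : Set E) (A : E → E) (S : ℝ → E →L[ℝ] E) : Prop :=
  (∀ x, x ∈ D ↔ ∃ y, GenLimitAt S x y) ∧ ∀ x ∈ D, GenLimitAt S x (A x)

/-- Graph of an operator with domain `D` and action `A`. -/
def opGraph (D : Set E) (A : E → E) : Set (E × E) := {p | p.1 ∈ D ∧ p.2 = A p.1}

/-- The operator `(D, A)` is closable: the closure of its graph is a graph of a function. -/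
def IsClosableOp (D : Set E) (A : E → E) : Prop :=
  ∀ x y₁ y₂, (x, y₁) ∈ closure (opGraph D A) → (x, y₂) ∈ closure (opGraph D A) → y₁ = y₂

/-- `(D', A')` is the closure of the operator `(D, A)`. -/
def IsClosureOf (D' : Set E) (A' : E → E) (D : Set E) (A : E → E) : Prop :=
  (∀ x, x ∈ D' ↔ ∃ y, (x, y) ∈ closure (opGraph D A)) ∧
  ∀ x ∈ D', (x, A' x) ∈ closure (opGraph D A)

/-- `(D, A)` is a linear operator (its domain is a subspace on which it acts linearly). -/
def IsLinearOp (D : Set E) (A : E → E) : Prop :=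
  (0 : E) ∈ D ∧
  (∀ x ∈ D, ∀ y ∈ D, x + y ∈ D ∧ A (x + y) = A x + A y) ∧
  (∀ (c : ℝ), ∀ x ∈ D, c • x ∈ D ∧ A (c • x) = c • A x)

/-- An evolution system `{R(t,s)}_{0 ≤ s ≤ t ≤ T}` on `E`. -/
structure IsEvolutionSystem (T : ℝ) (R : ℝ → ℝ → E →L[ℝ] E) : Prop where
  refl : ∀ t ∈ Icc (0 : ℝ) T, R t t = 1
  comp : ∀ ⦃s r t : ℝ⦄, 0 ≤ s → s ≤ r → r ≤ t → t ≤ T → R t s = (R t r).comp (R r s)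
  strong_cont : ∀ x : E, ContinuousOn (fun p : ℝ × ℝ => R p.1 p.2 x)
    {p : ℝ × ℝ | 0 ≤ p.2 ∧ p.2 ≤ p.1 ∧ p.1 ≤ T}

/-- The parameter domain `{(t,s) : 0 ≤ s ≤ t ≤ T}` of an evolution system. -/
def evolDomain (T : ℝ) : Set (ℝ × ℝ) := {p : ℝ × ℝ | 0 ≤ p.2 ∧ p.2 ≤ p.1 ∧ p.1 ≤ T}

/-- A family `{R^{(λ)}}_{λ∈[0,1]}` of evolution systems is continuous: for every `x ∈ E`
and every sequence `λₙ → λ₀` in `[0,1]`, `R^{(λₙ)}(t,s)x → R^{(λ₀)}(t,s)x` uniformly in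
`0 ≤ s ≤ t ≤ T`. -/
def IsContinuousEvolFamily (T : ℝ) (R : ℝ → ℝ → ℝ → E →L[ℝ] E) : Prop :=
  ∀ (x : E) (l : ℕ → ℝ) (l0 : ℝ), (∀ n, l n ∈ Icc (0 : ℝ) 1) → l0 ∈ Icc (0 : ℝ) 1 →
    Tendsto l atTop (𝓝 l0) →
    TendstoUniformlyOn (fun n p => R (l n) p.1 p.2 x) (fun p => R l0 p.1 p.2 x)
      atTop (evolDomain T)

/-- The map `Σ(x,w,λ)(t) = R^{(λ)}(t,0)x + ∫₀ᵗ R^{(λ)}(t,s) w(s) ds`. -/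
def evolMap (R : ℝ → ℝ → E →L[ℝ] E) (x : E) (w : ℝ → E) (t : ℝ) : E :=
  R t 0 x + ∫ s in (0 : ℝ)..t, R t s (w s)

/-- The Hausdorff measure of noncompactness of a set `Q`. -/
def hausdorffMNC (Q : Set E) : ℝ :=
  sInf {r : ℝ | 0 < r ∧ ∃ c : Finset E, Q ⊆ ⋃ y ∈ c, Metric.ball y r}

variable {V : Type*} [NormedAddCommGroup V] [NormedSpace ℝ V]

/-- The data of a time-dependent family `{A(t)}` of (unbounded) linear operators on `E`:
domains `dom t`, actions `op t`, the C₀ semigroups `sg t = S_{A(t)}`, and the bounded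
operators `bdd t ∈ L(V,E)` obtained by restricting `A(t)` to `V` (via the embedding `ι`). -/
structure HypData (E V : Type*) [NormedAddCommGroup E] [NormedSpace ℝ E]
    [NormedAddCommGroup V] [NormedSpace ℝ V] where
  dom : ℝ → Set E
  op : ℝ → E → E
  sg : ℝ → ℝ → E →L[ℝ] E
  bdd : ℝ → V →L[ℝ] E

/-- Each `A(t)`, `t ∈ [0,T]`, generates the C₀ semigroup `sg t`. -/
def HypGen (T : ℝ) (A : HypData E V) : Prop :=
  ∀ t ∈ Icc (0 : ℝ) T, IsC0Semigroup (A.sg t) ∧ IsGeneratorOf (A.dom t) (A.op t) (A.sg t)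

/-- Stability of a family of semigroups: for `0 ≤ t₁ ≤ ⋯ ≤ tₙ ≤ T`, `sᵢ ≥ 0`,
`‖S(t₁)(s₁)⋯S(tₙ)(sₙ)‖ ≤ M e^{ω(s₁+⋯+sₙ)}`. -/
def StableFamily {F : Type*} [NormedRing F] (T : ℝ) (S : ℝ → ℝ → F) (M ω : ℝ) : Prop :=
  ∀ (n : ℕ) (ts ss : Fin n → ℝ), Monotone ts → (∀ i, ts i ∈ Icc (0 : ℝ) T) →
    (∀ i, 0 ≤ ss i) →
    ‖(List.ofFn fun i => S (ts i) (ss i)).prod‖ ≤ M * Real.exp (ω * ∑ i, ss i)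

/-- Condition (Hyp'1): stability with `M = 1` and exponent `−ω`, `ω > 0`. -/
def Hyp1' (T : ℝ) (A : HypData E V) (ω : ℝ) : Prop :=
  0 < ω ∧ StableFamily T A.sg 1 (-ω)

/-- Condition (Hyp1): stability with constants `M ≥ 1`, `ω ∈ ℝ`. -/
def Hyp1 (T : ℝ) (A : HypData E V) (M ω : ℝ) : Prop :=
  1 ≤ M ∧ StableFamily T A.sg M ω

variable (ι : V →L[ℝ] E)

/-- Condition (Hyp2): `V` is `A(t)`-admissible for each `t` and the family of parts of the
`A(t)` in `V` is stable with constants `M_V`, `ω_V`. -/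
def Hyp2 (T : ℝ) (A : HypData E V) (MV ωV : ℝ) : Prop :=
  ∃ SV : ℝ → ℝ → V →L[ℝ] V,
    (∀ t ∈ Icc (0 : ℝ) T, IsC0Semigroup (SV t)) ∧
    (∀ t ∈ Icc (0 : ℝ) T, ∀ s ≥ (0 : ℝ), ∀ v : V, ι (SV t s v) = A.sg t s (ι v)) ∧
    1 ≤ MV ∧ StableFamily T SV MV ωV

/-- Condition (Hyp3): `V ⊆ D(A(t))`, `A(t)|_V = bdd t ∈ L(V,E)`, and `t ↦ bdd t` is
norm-continuous on `[0,T]`. -/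
def Hyp3 (T : ℝ) (A : HypData E V) : Prop :=
  (∀ t ∈ Icc (0 : ℝ) T, ∀ v : V, ι v ∈ A.dom t ∧ A.op t (ι v) = A.bdd t v) ∧
  ContinuousOn A.bdd (Icc (0 : ℝ) T)

/-- The time average `A₀ = (1/T)∫₀ᵀ A(τ) dτ ∈ L(V,E)`. -/
def timeAvg (T : ℝ) (A : HypData E V) : V →L[ℝ] E :=
  (1 / T) • ∫ τ in (0 : ℝ)..T, A.bdd τ

/-- Condition (Hyp4): there is `μ₀ > −ω` such that `(μ₀ I − A₀)V` is dense in `E`. -/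
def Hyp4 (T : ℝ) (A : HypData E V) (ω : ℝ) : Prop :=
  ∃ μ0 : ℝ, -ω < μ0 ∧ Dense (Set.range fun v : V => μ0 • ι v - timeAvg T A v)

/-- Condition (Hyp5): `A(0) = A(T)` (equal domains and actions). -/
def Hyp5 (T : ℝ) (A : HypData E V) : Prop :=
  A.dom 0 = A.dom T ∧ ∀ x ∈ A.dom 0, A.op 0 x = A.op T x

/-- `R` is the evolution system determined by the family with restrictions `Abdd t ∈ L(V,E)`:
it is an evolution system satisfying the norm bound `‖R(t,s)‖ ≤ M e^{ω(t−s)}`, with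
`(∂⁺/∂t)R(t,s)v|_{t=s} = A(s)v` and `(∂/∂s)R(t,s)v = −R(t,s)A(s)v` for `v ∈ V`. -/
def IsDeterminedEvolSystem (T : ℝ) (Abdd : ℝ → V →L[ℝ] E) (M ω : ℝ)
    (R : ℝ → ℝ → E →L[ℝ] E) : Prop :=
  IsEvolutionSystem T R ∧
  (∀ s t : ℝ, 0 ≤ s → s ≤ t → t ≤ T → ‖R t s‖ ≤ M * Real.exp (ω * (t - s))) ∧
  (∀ v : V, ∀ s ∈ Ico (0 : ℝ) T,
    HasDerivWithinAt (fun t => R t s (ι v)) (Abdd s v) (Ici s) s) ∧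
  (∀ v : V, ∀ s t : ℝ, 0 ≤ s → s ≤ t → t ≤ T →
    HasDerivWithinAt (fun r => R t r (ι v)) (-(R t s (Abdd s v))) (Icc (0 : ℝ) t) s)

/-!
Trotter–Chernoff without resolvents. If `‖B ^ k‖ ≤ M` for all `k`, the telescoping identity
`B ^ p (w 0) - w p = ∑ i < p, B ^ (p - 1 - i) (B (w i) - w (i + 1))` bounds the distance between an
orbit of `B` and any sequence `w` by the one-step defects of `w`. Choose `w` on a polygonal
approximation of the semigroup orbit `τ ↦ S τ x` whose vertices lie in the core on which
`h⁻¹ • (B - 1)` converges to the generator as `h → 0`: the defect is affine along each edge, so it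
is small on the edge because it is small at both ends. Hence `B ^ m x → S s x` when `m * h → s`, and
`h • ∑ i < k, B ^ i x`, being the integral of the step function `τ ↦ B ^ ⌊τ / h⌋₊ x`, converges to
an integral of `τ ↦ S τ x` by dominated convergence.

For `B = R T 0` and `h = λ * T` the convergence of `h⁻¹ • (B - 1)` on `V` to the averaged operator
is the identity `λ⁻¹ • (R T 0 v - v) = ∫ s in 0..T, R T s (A s v)` together with the strong
convergence `R T s → 1` as `λ → 0`.
-/

section PowerBounded

variable {B : E →L[ℝ] E} {M : ℝ}

theorem norm_pow_le_one (hB : ‖B‖ ≤ 1) (k : ℕ) : ‖B ^ k‖ ≤ 1 := by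
  induction k with
  | zero => exact ContinuousLinearMap.norm_id_le
  | succ k ih =>
    rw [pow_succ]
    exact (norm_mul_le _ _).trans (mul_le_one₀ ih (norm_nonneg _) hB)

theorem norm_pow_apply_sub_le_sum (hB : ∀ k, ‖B ^ k‖ ≤ M) (w : ℕ → E) (p : ℕ) :
    ‖(B ^ p) (w 0) - w p‖ ≤ M * ∑ i ∈ Finset.range p, ‖B (w i) - w (i + 1)‖ := by
  induction p generalizing w with
  | zero => simp
  | succ p ih =>
    have split : (B ^ (p + 1)) (w 0) - w (p + 1)
        = (B ^ p) (B (w 0) - w 1) + ((B ^ p) (w 1) - w (p + 1)) := by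
      rw [pow_succ, mul_apply_eq_comp, map_sub]
      abel
    calc ‖(B ^ (p + 1)) (w 0) - w (p + 1)‖
        ≤ ‖(B ^ p) (B (w 0) - w 1)‖ + ‖(B ^ p) (w 1) - w (p + 1)‖ := split ▸ norm_add_le _ _
      _ ≤ M * ‖B (w 0) - w 1‖ + M * ∑ i ∈ Finset.range p, ‖B (w (i + 1)) - w (i + 1 + 1)‖ :=
        add_le_add ((B ^ p).le_of_opNorm_le (hB p) _) (ih fun i => w (i + 1))
      _ = M * ∑ i ∈ Finset.range (p + 1), ‖B (w i) - w (i + 1)‖ := by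
        rw [Finset.sum_range_succ', mul_add, add_comm]

theorem norm_pow_apply_sub_pow_apply_le (hB : ∀ k, ‖B ^ k‖ ≤ M) (x : E) (m p : ℕ) :
    ‖(B ^ m) x - (B ^ p) x‖ ≤ M * (|(m : ℝ) - p| * (M * ‖B x - x‖)) := by
  wlog hpm : p ≤ m generalizing m p
  · rw [norm_sub_rev, abs_sub_comm]
    exact this p m (le_of_not_ge hpm)
  obtain ⟨d, rfl⟩ := Nat.exists_eq_add_of_le' hpm
  have increment : ‖B ((B ^ p) x) - (B ^ p) x‖ ≤ M * ‖B x - x‖ := by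
    rw [← mul_apply_eq_comp, ← pow_succ', pow_succ, mul_apply_eq_comp, ← map_sub]
    exact (B ^ p).le_of_opNorm_le (hB p) _
  have M_nonneg : 0 ≤ M := (norm_nonneg _).trans (hB 0)
  calc ‖(B ^ (d + p)) x - (B ^ p) x‖
      ≤ M * ∑ _i ∈ Finset.range d, ‖B ((B ^ p) x) - (B ^ p) x‖ := by
        rw [pow_add, mul_apply_eq_comp]
        exact norm_pow_apply_sub_le_sum hB (fun _ => (B ^ p) x) d
    _ ≤ M * (|((d + p : ℕ) : ℝ) - p| * (M * ‖B x - x‖)) := by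
        rw [Finset.sum_const, Finset.card_range, nsmul_eq_mul, Nat.cast_add, add_sub_cancel_right,
          Nat.abs_cast]
        gcongr

theorem norm_apply_lineMap_sub_le {h c θ : ℝ} (hh : 0 < h) {x x' e : E}
    (hx : ‖h⁻¹ • (B x - x) - e‖ ≤ c) (hx' : ‖h⁻¹ • (B x' - x') - e‖ ≤ c)
    (hθ : θ ∈ Icc (0 : ℝ) 1) :
    ‖B (AffineMap.lineMap x x' θ) - (AffineMap.lineMap x x' θ + h • e)‖ ≤ h * c := by
  have combination : B (AffineMap.lineMap x x' θ) - (AffineMap.lineMap x x' θ + h • e)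
      = h • AffineMap.lineMap (h⁻¹ • (B x - x) - e) (h⁻¹ • (B x' - x') - e) θ := by
    simp only [AffineMap.lineMap_apply_module, map_add, map_smul]
    match_scalars <;> field_simp
    ring
  have in_ball := (convex_closedBall (0 : E) c).lineMap_mem
    (mem_closedBall_zero_iff.2 hx) (mem_closedBall_zero_iff.2 hx') hθ
  rw [combination, norm_smul, Real.norm_of_nonneg hh.le]
  exact mul_le_mul_of_nonneg_left (mem_closedBall_zero_iff.1 in_ball) hh.le

theorem norm_pow_apply_sub_le_of_slope (hB : ∀ k, ‖B ^ k‖ ≤ M) {h δ c : ℝ} (hh : 0 < h)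
    (hδ : 0 < δ) {x x' : E}
    (hx : ‖h⁻¹ • (B x - x) - δ⁻¹ • (x' - x)‖ ≤ c)
    (hx' : ‖h⁻¹ • (B x' - x') - δ⁻¹ • (x' - x)‖ ≤ c) {p : ℕ} (hp : p * h ≤ δ) :
    ‖(B ^ p) x - x'‖ ≤ M * (p * (h * c)) + (δ - p * h) * ‖δ⁻¹ • (x' - x)‖ := by
  set w : ℕ → E := fun i => AffineMap.lineMap x x' (i * h / δ) with hw
  have M_nonneg : 0 ≤ M := (norm_nonneg _).trans (hB 0)
  have defect : ∀ i ∈ Finset.range p, ‖B (w i) - w (i + 1)‖ ≤ h * c := by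
    intro i hi
    have hi_le : (i : ℝ) * h ≤ δ := by
      refine le_trans ?_ hp
      gcongr
      exact (Finset.mem_range.1 hi).le
    have w_succ : w (i + 1) = w i + h • δ⁻¹ • (x' - x) := by
      simp only [hw, AffineMap.lineMap_apply_module', Nat.cast_add_one]
      module
    rw [w_succ]
    exact norm_apply_lineMap_sub_le hh hx hx' ⟨by positivity, (div_le_one hδ).2 hi_le⟩
  have along_chord : ‖(B ^ p) x - w p‖ ≤ M * (p * (h * c)) := by
    calc ‖(B ^ p) x - w p‖ = ‖(B ^ p) (w 0) - w p‖ := by simp [hw]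
      _ ≤ M * ∑ i ∈ Finset.range p, ‖B (w i) - w (i + 1)‖ := norm_pow_apply_sub_le_sum hB w p
      _ ≤ M * (p * (h * c)) := by
        gcongr
        simpa using Finset.sum_le_sum defect
  have remainder : ‖w p - x'‖ = (δ - p * h) * ‖δ⁻¹ • (x' - x)‖ := by
    have : w p - x' = (p * h - δ) • δ⁻¹ • (x' - x) := by
      simp only [hw, AffineMap.lineMap_apply_module']
      match_scalars <;> field_simp
      ring
    rw [this, norm_smul, Real.norm_of_nonpos (by linarith), neg_sub]
  calc ‖(B ^ p) x - x'‖ ≤ ‖(B ^ p) x - w p‖ + ‖w p - x'‖ := norm_sub_le_norm_sub_add_norm_sub ..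
    _ ≤ M * (p * (h * c)) + (δ - p * h) * ‖δ⁻¹ • (x' - x)‖ := add_le_add along_chord remainder.le

theorem norm_pow_mul_apply_sub_le_of_slope (hB : ∀ k, ‖B ^ k‖ ≤ M) {h δ c : ℝ} (hh : 0 < h)
    (hδ : 0 < δ) {y : ℕ → E} {K : ℕ}
    (hl : ∀ k < K, ‖h⁻¹ • (B (y k) - y k) - δ⁻¹ • (y (k + 1) - y k)‖ ≤ c)
    (hr : ∀ k < K, ‖h⁻¹ • (B (y (k + 1)) - y (k + 1)) - δ⁻¹ • (y (k + 1) - y k)‖ ≤ c)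
    {p : ℕ} (hp : p * h ≤ δ) :
    ‖(B ^ (p * K)) (y 0) - y K‖ ≤ M * ∑ k ∈ Finset.range K,
      (M * (p * (h * c)) + (δ - p * h) * ‖δ⁻¹ • (y (k + 1) - y k)‖) := by
  have M_nonneg : 0 ≤ M := (norm_nonneg _).trans (hB 0)
  rw [pow_mul]
  refine (norm_pow_apply_sub_le_sum (fun k => pow_mul B p k ▸ hB (p * k)) y K).trans ?_
  gcongr with k hk
  have hkK := Finset.mem_range.1 hk
  exact norm_pow_apply_sub_le_of_slope hB hh hδ (hl k hkK) (hr k hkK) hp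

end PowerBounded

section Semigroup

variable {S : ℝ → E →L[ℝ] E} {x y : E}

namespace IsC0Semigroup

theorem apply_apply_comm (hS : IsC0Semigroup S) {s t : ℝ} (hs : 0 ≤ s) (ht : 0 ≤ t) (x : E) :
    S t (S s x) = S s (S t x) := by
  rw [← ContinuousLinearMap.comp_apply, ← ContinuousLinearMap.comp_apply,
    ← hS.map_add ht hs, ← hS.map_add hs ht, add_comm]

theorem genLimitAt_apply (hS : IsC0Semigroup S) (hxy : GenLimitAt S x y) {s : ℝ} (hs : 0 ≤ s) :
    GenLimitAt S (S s x) (S s y) := by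
  refine (((S s).continuous.tendsto y).comp hxy).congr' ?_
  filter_upwards [self_mem_nhdsWithin] with t ht
  rw [Function.comp_apply, map_smul, map_sub, hS.apply_apply_comm hs (le_of_lt ht)]

theorem hasDerivWithinAt_apply (hS : IsC0Semigroup S) (hxy : GenLimitAt S x y) {s : ℝ}
    (hs : 0 ≤ s) : HasDerivWithinAt (fun t => S t x) (S s y) (Ici s) s := by
  rw [← hasDerivWithinAt_Ioi_iff_Ici, hasDerivWithinAt_iff_tendsto_slope' self_notMem_Ioi]
  have shift : Tendsto (fun t : ℝ => t - s) (𝓝[>] s) (𝓝[>] 0) := by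
    refine tendsto_nhdsWithin_iff.2 ⟨?_, ?_⟩
    · exact ((continuous_sub_right s).tendsto' s 0 (sub_self s)).mono_left nhdsWithin_le_nhds
    · filter_upwards [self_mem_nhdsWithin] with t ht using sub_pos.2 (mem_Ioi.1 ht)
  refine ((hS.genLimitAt_apply hxy hs).comp shift).congr' ?_
  filter_upwards [self_mem_nhdsWithin] with t ht
  rw [Function.comp_apply, slope_def_module, ← ContinuousLinearMap.comp_apply,
    ← hS.map_add (sub_nonneg.2 (le_of_lt ht)) hs, sub_add_cancel]

theorem norm_apply_sub_apply_sub_smul_le (hS : IsC0Semigroup S) (hxy : GenLimitAt S x y)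
    {a b c : ℝ} (ha : 0 ≤ a) (hab : a ≤ b) (hc : ∀ τ ∈ Ico a b, ‖S τ y - S a y‖ ≤ c) :
    ‖S b x - S a x - (b - a) • S a y‖ ≤ c * (b - a) := by
  have cont : ContinuousOn (fun τ => S τ x - τ • S a y) (Icc a b) :=
    ((hS.strong_cont x).mono fun τ hτ => ha.trans hτ.1).sub (by fun_prop)
  have deriv : ∀ τ ∈ Ico a b,
      HasDerivWithinAt (fun τ => S τ x - τ • S a y) (S τ y - S a y) (Ici τ) τ := fun τ hτ => by
    simpa using (hS.hasDerivWithinAt_apply hxy (ha.trans hτ.1)).fun_sub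
      ((hasDerivWithinAt_id τ (Ici τ)).smul_const (S a y))
  convert! norm_image_sub_le_of_norm_deriv_right_le_segment cont deriv hc b ⟨hab, le_rfl⟩ using 2
  module

end IsC0Semigroup

theorem IsGeneratorOf.mem_closure_opGraph {D D' : Set E} {A A' : E → E}
    (hgen : IsGeneratorOf D' A' S) (hclos : IsClosureOf D' A' D A) (hxy : GenLimitAt S x y) :
    (x, y) ∈ closure (opGraph D A) := by
  have hx : x ∈ D' := (hgen.1 x).2 ⟨y, hxy⟩
  rw [tendsto_nhds_unique hxy (hgen.2 x hx)]
  exact hclos.2 x hx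

theorem IsClosureOf.subset {F : Type*} [NormedAddCommGroup F] {D D' : Set F} {A A' : F → F}
    (hclos : IsClosureOf D' A' D A) :
    D ⊆ D' :=
  fun x hx => (hclos.1 x).2 ⟨A x, subset_closure ⟨hx, rfl⟩⟩

/-- A polygonal approximation, relative to a set `G` of pairs, of the orbit `τ ↦ S τ x` on
`[0, K * δ]`: its vertices `(g k).1` are `δ` apart in time, its end points are `η`-close to those
of the orbit, and the slope of each edge is `η`-close to the partner `(g k).2` of either end. -/
structure IsPolygonalApprox (S : ℝ → E →L[ℝ] E) (G : Set (E × E)) (x : E) (η δ : ℝ) (K : ℕ)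
    (g : ℕ → E × E) : Prop where
  mem : ∀ k, g k ∈ G
  norm_start_sub_le : ‖(g 0).1 - x‖ ≤ η
  norm_end_sub_le : ‖(g K).1 - S (K * δ) x‖ ≤ η
  norm_left_sub_slope_le : ∀ k < K, ‖(g k).2 - δ⁻¹ • ((g (k + 1)).1 - (g k).1)‖ ≤ η
  norm_right_sub_slope_le : ∀ k < K, ‖(g (k + 1)).2 - δ⁻¹ • ((g (k + 1)).1 - (g k).1)‖ ≤ η

theorem exists_nat_mul_eq_of_nonneg {s d : ℝ} (hs : 0 ≤ s) (hd : 0 < d) :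
    ∃ (K : ℕ) (δ : ℝ), 0 < δ ∧ δ < d ∧ K * δ = s := by
  obtain rfl | hs := hs.eq_or_lt
  · exact ⟨0, d / 2, half_pos hd, half_lt_self hd, by simp⟩
  obtain ⟨K, hK⟩ := exists_nat_gt (s / d)
  have K_pos : (0 : ℝ) < K := (div_pos hs hd).trans hK
  exact ⟨K, s / K, div_pos hs K_pos, (div_lt_comm₀ hd K_pos).1 hK, mul_div_cancel₀ s K_pos.ne'⟩

theorem IsC0Semigroup.exists_norm_slope_sub_le (hS : IsC0Semigroup S) (hxy : GenLimitAt S x y)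
    {s c : ℝ} (hs : 0 ≤ s) (hc : 0 < c) :
    ∃ (K : ℕ) (δ : ℝ), 0 < δ ∧ K * δ = s ∧ ∀ k < K,
      ‖S ((k + 1 : ℕ) * δ) y - S (k * δ) y‖ ≤ c ∧
      ‖δ⁻¹ • (S ((k + 1 : ℕ) * δ) x - S (k * δ) x) - S (k * δ) y‖ ≤ c := by
  obtain ⟨d, hd, orbit_unifCont⟩ := Metric.uniformContinuousOn_iff_le.1
    (isCompact_Icc.uniformContinuousOn_of_continuous
      ((hS.strong_cont y).mono (Icc_subset_Ici_self : Icc 0 s ⊆ Ici 0))) c hc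
  obtain ⟨K, δ, hδ, hδd, rfl⟩ := exists_nat_mul_eq_of_nonneg hs hd
  refine ⟨K, δ, hδ, rfl, fun k hk => ?_⟩
  have step : ((k + 1 : ℕ) : ℝ) * δ - k * δ = δ := by push_cast; ring
  have oscillation : ∀ τ ∈ Icc (k * δ) ((k + 1 : ℕ) * δ), ‖S τ y - S (k * δ) y‖ ≤ c := by
    intro τ hτ
    have next_le : ((k + 1 : ℕ) : ℝ) * δ ≤ K * δ := by gcongr; exact hk
    have start_nonneg : 0 ≤ k * δ := by positivity
    rw [← dist_eq_norm]
    refine orbit_unifCont τ ⟨start_nonneg.trans hτ.1, hτ.2.trans next_le⟩ _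
      ⟨start_nonneg, hτ.1.trans (hτ.2.trans next_le)⟩ ?_
    rw [Real.dist_eq, abs_of_nonneg (sub_nonneg.2 hτ.1)]
    linarith [hτ.2]
  have edge_le : k * δ ≤ ((k + 1 : ℕ) : ℝ) * δ := by linarith
  refine ⟨oscillation _ (right_mem_Icc.2 edge_le), ?_⟩
  have integrated := hS.norm_apply_sub_apply_sub_smul_le hxy (by positivity) edge_le
    fun τ hτ => oscillation τ (Ico_subset_Icc_self hτ)
  rw [step] at integrated
  rwa [← inv_smul_smul₀ hδ.ne' (S (k * δ) y), ← smul_sub, norm_smul, norm_inv,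
    Real.norm_of_nonneg hδ.le, inv_mul_le_iff₀ hδ, mul_comm δ c]

theorem norm_sub_slope_le_of_norm_slope_sub_le {x' z z' : E} {δ c : ℝ} (hδ : 0 < δ)
    (hz : ‖z - x‖ ≤ δ * c) (hz' : ‖z' - x'‖ ≤ δ * c) (hy : ‖δ⁻¹ • (x' - x) - y‖ ≤ c) :
    ‖y - δ⁻¹ • (z' - z)‖ ≤ 3 * c := by
  have quotient_le : ∀ w : E, ‖w‖ ≤ δ * c → ‖δ⁻¹ • w‖ ≤ c := fun w hw => by
    rwa [norm_smul, norm_inv, Real.norm_of_nonneg hδ.le, inv_mul_le_iff₀ hδ]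
  have split : y - δ⁻¹ • (z' - z)
      = δ⁻¹ • (z - x) - δ⁻¹ • (z' - x') - (δ⁻¹ • (x' - x) - y) := by
    module
  rw [split]
  linarith [norm_sub_le_of_le (norm_sub_le_of_le (quotient_le _ hz) (quotient_le _ hz')) hy]

theorem IsC0Semigroup.exists_isPolygonalApprox (hS : IsC0Semigroup S) {G : Set (E × E)}
    (hG : ∀ x y, GenLimitAt S x y → (x, y) ∈ closure G) (hxy : GenLimitAt S x y) {s η : ℝ}
    (hs : 0 ≤ s) (hη : 0 < η) :
    ∃ (δ : ℝ) (K : ℕ) (g : ℕ → E × E), 0 < δ ∧ K * δ = s ∧ IsPolygonalApprox S G x η δ K g := by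
  obtain ⟨c, hc, rfl⟩ : ∃ c > 0, η = 5 * c := ⟨η / 5, by positivity, by ring⟩
  obtain ⟨K, δ, hδ, hKδ, orbit⟩ := hS.exists_norm_slope_sub_le hxy hs hc
  have vertices : ∀ k : ℕ, ∃ q ∈ G, dist (S (k * δ) x, S (k * δ) y) q < min c (δ * c) :=
    fun k => Metric.mem_closure_iff.1 (hG _ _ (hS.genLimitAt_apply hxy (by positivity))) _
      (by positivity)
  choose g hgG hg using vertices
  have fst_close : ∀ k, ‖(g k).1 - S (k * δ) x‖ ≤ min c (δ * c) := fun k => by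
    rw [← dist_eq_norm, dist_comm]
    exact (le_max_left _ _).trans (hg k).le
  have snd_close : ∀ k, ‖(g k).2 - S (k * δ) y‖ ≤ c := fun k => by
    rw [← dist_eq_norm, dist_comm]
    exact (le_max_right _ _).trans ((hg k).le.trans (min_le_left _ _))
  have slope_close : ∀ k < K, ‖S (k * δ) y - δ⁻¹ • ((g (k + 1)).1 - (g k).1)‖ ≤ 3 * c :=
    fun k hk => norm_sub_slope_le_of_norm_slope_sub_le hδ ((fst_close k).trans (min_le_right _ _))
      ((fst_close (k + 1)).trans (min_le_right _ _)) (orbit k hk).2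
  refine ⟨δ, K, g, hδ, hKδ, hgG, ?_, ?_, fun k hk => ?_, fun k hk => ?_⟩
  · have start := (fst_close 0).trans (min_le_left _ _)
    rw [Nat.cast_zero, zero_mul, hS.map_zero, one_apply_eq_self] at start
    linarith
  · linarith [(fst_close K).trans (min_le_left _ _)]
  · linarith [norm_sub_le_norm_sub_add_norm_sub (g k).2 (S (k * δ) y)
      (δ⁻¹ • ((g (k + 1)).1 - (g k).1)), snd_close k, slope_close k hk]
  · linarith [norm_sub_le_norm_sub_add_norm_sub (g (k + 1)).2 (S (k * δ) y)
      (δ⁻¹ • ((g (k + 1)).1 - (g k).1)),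
      norm_sub_le_norm_sub_add_norm_sub (g (k + 1)).2 (S ((k + 1 : ℕ) * δ) y) (S (k * δ) y),
      snd_close (k + 1), (orbit k hk).1, slope_close k hk]

end Semigroup

section StrongLimits

variable {α : Type*} {l : Filter α} {L : α → E →L[ℝ] E} {C : ℝ}

theorem tendsto_apply_of_dense (hL : ∀ a, ‖L a‖ ≤ C) {L' : E →L[ℝ] E} {s : Set E}
    (hs : Dense s) (h : ∀ x ∈ s, Tendsto (fun a => L a x) l (𝓝 (L' x))) (x : E) :
    Tendsto (fun a => L a x) l (𝓝 (L' x)) := by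
  have equicontinuous : Equicontinuous fun a x => L a x :=
    (LipschitzWith.uniformEquicontinuous (fun a x => L a x) C.toNNReal fun a =>
      (L a).lipschitz.weaken (NNReal.coe_le_coe.1
        ((hL a).trans (Real.le_coe_toNNReal C)))).equicontinuous
  exact (equicontinuous.isClosed_setOfPred_tendsto L'.continuous).closure_subset_iff.2 h (hs x)

theorem tendsto_apply_of_tendsto (hL : ∀ᶠ a in l, ‖L a‖ ≤ C) {x : α → E} {x₀ y : E}
    (hx : Tendsto x l (𝓝 x₀)) (h : Tendsto (fun a => L a x₀) l (𝓝 y)) :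
    Tendsto (fun a => L a (x a)) l (𝓝 y) := by
  have difference : Tendsto (fun a => L a (x a) - L a x₀) l (𝓝 0) := by
    have bound := (tendsto_iff_norm_sub_tendsto_zero.1 hx).const_mul C
    rw [mul_zero] at bound
    refine squeeze_zero_norm' ?_ bound
    filter_upwards [hL] with a ha
    rw [← map_sub]
    exact (L a).le_of_opNorm_le ha _
  simpa using difference.add h

end StrongLimits

section Chernoff

variable {α : Type*} {l : Filter α} {B : α → E →L[ℝ] E} {h : α → ℝ} {M : ℝ}

/-- The limit, in the sense of graphs, of the difference quotients `(h a)⁻¹ • (B a - 1)` along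
`l`: the pairs `(x, y)` for which they converge to `y` at `x`. -/
def limitGraph (l : Filter α) (B : α → E →L[ℝ] E) (h : α → ℝ) : Set (E × E) :=
  {q | Tendsto (fun a => (h a)⁻¹ • (B a q.1 - q.1)) l (𝓝 q.2)}

theorem tendsto_floor_div_mul_self (hh : Tendsto h l (𝓝[>] 0)) {s : ℝ} (hs : 0 ≤ s) :
    Tendsto (fun a => (⌊s / h a⌋₊ : ℝ) * h a) l (𝓝 s) := by
  simpa [Function.comp_def, div_eq_mul_inv] using
    (tendsto_nat_floor_mul_div_atTop hs).comp hh.inv_tendsto_nhdsGT_zero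

theorem tendsto_pow_apply_sub_pow_apply (hB : ∀ a k, ‖B a ^ k‖ ≤ M)
    (hh : Tendsto h l (𝓝[>] 0)) {q : E × E} (hq : q ∈ limitGraph l B h) {m p : α → ℕ}
    (hmp : Tendsto (fun a => (m a : ℝ) * h a - p a * h a) l (𝓝 0)) :
    Tendsto (fun a => (B a ^ m a) q.1 - (B a ^ p a) q.1) l (𝓝 0) := by
  have bound := (hmp.abs.mul ((hq.norm.const_mul M))).const_mul M
  rw [abs_zero, zero_mul, mul_zero] at bound
  refine squeeze_zero_norm' ?_ bound
  filter_upwards [hh.eventually self_mem_nhdsWithin] with a (ha : 0 < h a)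
  refine (norm_pow_apply_sub_pow_apply_le (hB a) q.1 _ _).trans_eq ?_
  rw [← sub_mul, abs_mul, abs_of_pos ha, norm_smul, norm_inv, Real.norm_of_nonneg ha.le]
  field_simp

theorem IsPolygonalApprox.eventually_norm_pow_mul_apply_sub_le {S : ℝ → E →L[ℝ] E} {x : E}
    {η δ : ℝ} {K : ℕ} {g : ℕ → E × E} (hg : IsPolygonalApprox S (limitGraph l B h) x η δ K g)
    (hB : ∀ a k, ‖B a ^ k‖ ≤ M) (hh : Tendsto h l (𝓝[>] 0)) (hη : 0 < η) (hδ : 0 < δ) :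
    ∀ᶠ a in l, ‖(B a ^ (⌊δ / h a⌋₊ * K)) (g 0).1 - (g K).1‖
      ≤ M * (K * (M * (δ * (2 * η)))) + η := by
  have floor_lim := tendsto_floor_div_mul_self hh hδ.le
  have error_lim := (tendsto_finsetSum (Finset.range K) fun k _ =>
    ((floor_lim.mul_const (2 * η)).const_mul M).add ((floor_lim.const_sub δ).mul_const
      ‖δ⁻¹ • ((g (k + 1)).1 - (g k).1)‖)).const_mul M
  simp only [sub_self, zero_mul, add_zero, Finset.sum_const, Finset.card_range,
    nsmul_eq_mul] at error_lim
  have quotient_close : ∀ k (e : E), ‖(g k).2 - e‖ ≤ η →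
      ∀ᶠ a in l, ‖(h a)⁻¹ • (B a (g k).1 - (g k).1) - e‖ ≤ 2 * η := fun k e he =>
    ((hg.mem k).sub_const e).norm.eventually_le_const (by linarith)
  have left_close := (Finset.eventually_all (Finset.range K)).2 fun k hk =>
    quotient_close k _ (hg.norm_left_sub_slope_le k (Finset.mem_range.1 hk))
  have right_close := (Finset.eventually_all (Finset.range K)).2 fun k hk =>
    quotient_close (k + 1) _ (hg.norm_right_sub_slope_le k (Finset.mem_range.1 hk))
  filter_upwards [hh.eventually self_mem_nhdsWithin, left_close, right_close,
    error_lim.eventually_le_const (lt_add_of_pos_right _ hη)] with a (ha : 0 < h a) hl hr herror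
  refine le_trans ?_ herror
  simpa only [mul_assoc] using norm_pow_mul_apply_sub_le_of_slope (hB a) ha hδ
    (fun k hk => hl k (Finset.mem_range.2 hk)) (fun k hk => hr k (Finset.mem_range.2 hk))
    ((le_div_iff₀ ha).1 (Nat.floor_le (by positivity)))

theorem IsC0Semigroup.eventually_norm_pow_apply_sub_apply_le {S : ℝ → E →L[ℝ] E}
    (hS : IsC0Semigroup S) (hB : ∀ a k, ‖B a ^ k‖ ≤ M) (hh : Tendsto h l (𝓝[>] 0))
    (hG : ∀ x y, GenLimitAt S x y → (x, y) ∈ closure (limitGraph l B h)) {x y : E}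
    (hxy : GenLimitAt S x y) {s : ℝ} (hs : 0 ≤ s) {m : α → ℕ}
    (hm : Tendsto (fun a => (m a : ℝ) * h a) l (𝓝 s)) {η : ℝ} (hη : 0 < η) :
    ∀ᶠ a in l, ‖(B a ^ m a) x - S s x‖ ≤ (M + 2 * M ^ 2 * s + 3) * η := by
  obtain ⟨δ, K, g, hδ, rfl, hg⟩ := hS.exists_isPolygonalApprox hG hxy hs hη
  have same_time : Tendsto (fun a => (m a : ℝ) * h a - (⌊δ / h a⌋₊ * K : ℕ) * h a) l (𝓝 0) := by
    rw [← sub_self (K * δ)]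
    refine hm.sub (((tendsto_floor_div_mul_self hh hδ.le).const_mul (K : ℝ)).congr fun a => ?_)
    push_cast
    ring
  have powers_close := (tendsto_pow_apply_sub_pow_apply hB hh (hg.mem 0) same_time).norm
    |>.eventually_le_const (norm_zero.trans_lt hη)
  filter_upwards [powers_close, hg.eventually_norm_pow_mul_apply_sub_le hB hh hη hδ]
    with a hpow hpolygon
  have start_close : ‖(B a ^ m a) x - (B a ^ m a) (g 0).1‖ ≤ M * η := by
    rw [← map_sub]
    refine (B a ^ m a).le_of_opNorm_le_of_le (hB a _) ?_
    rw [norm_sub_rev]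
    exact hg.norm_start_sub_le
  calc ‖(B a ^ m a) x - S (K * δ) x‖
      ≤ ‖(B a ^ m a) x - (B a ^ m a) (g 0).1‖
        + ‖(B a ^ m a) (g 0).1 - (B a ^ (⌊δ / h a⌋₊ * K)) (g 0).1‖
        + ‖(B a ^ (⌊δ / h a⌋₊ * K)) (g 0).1 - (g K).1‖ + ‖(g K).1 - S (K * δ) x‖ := by
        simpa only [dist_eq_norm] using (dist_triangle _ (g K).1 _).trans
          (add_le_add_left (dist_triangle4 _ _ _ _) _)
    _ ≤ M * η + η + (M * (K * (M * (δ * (2 * η)))) + η) + η := by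
        gcongr
        exact hg.norm_end_sub_le
    _ = (M + 2 * M ^ 2 * (K * δ) + 3) * η := by ring

theorem IsC0Semigroup.tendsto_pow_apply {S : ℝ → E →L[ℝ] E}
    (hS : IsC0Semigroup S) (hB : ∀ a k, ‖B a ^ k‖ ≤ M) (hh : Tendsto h l (𝓝[>] 0))
    (hG : ∀ x y, GenLimitAt S x y → (x, y) ∈ closure (limitGraph l B h))
    (hdense : Dense {x | ∃ y, GenLimitAt S x y}) {s : ℝ} (hs : 0 ≤ s) {m : α → ℕ}
    (hm : Tendsto (fun a => (m a : ℝ) * h a) l (𝓝 s)) (x : E) :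
    Tendsto (fun a => (B a ^ m a) x) l (𝓝 (S s x)) := by
  refine tendsto_apply_of_dense (fun a => hB a (m a)) hdense ?_ x
  rintro z ⟨y, hzy⟩
  refine Metric.tendsto_nhds.2 fun ρ hρ => ?_
  obtain ⟨η, hη, hηρ⟩ := exists_pos_mul_lt hρ (M + 2 * M ^ 2 * s + 3)
  filter_upwards [hS.eventually_norm_pow_apply_sub_apply_le hB hh hG hzy hs hm hη] with a ha
  rw [dist_eq_norm]
  exact ha.trans_lt hηρ

end Chernoff

section RiemannSum

theorem smul_sum_range_eq_integral [CompleteSpace E] {h : ℝ} (hh : 0 < h) (g : ℕ → E) (k : ℕ) :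
    h • ∑ i ∈ Finset.range k, g i = ∫ τ in (0 : ℝ)..k * h, g ⌊τ / h⌋₊ := by
  have floor_eq : ∀ i : ℕ, ∀ τ ∈ Ioo (i * h) ((i + 1 : ℕ) * h), g i = g ⌊τ / h⌋₊ := by
    intro i τ hτ
    rw [(Nat.floor_eq_iff (div_nonneg ((by positivity : 0 ≤ i * h).trans hτ.1.le) hh.le)).2
      ⟨(le_div_iff₀ hh).2 hτ.1.le, (div_lt_iff₀ hh).2 (by exact_mod_cast hτ.2)⟩]
  have edge_le : ∀ i : ℕ, i * h ≤ (i + 1 : ℕ) * h := fun i => by gcongr; exact i.le_succ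
  have integral_edge : ∀ i : ℕ,
      ∫ τ in i * h..(i + 1 : ℕ) * h, g ⌊τ / h⌋₊ = h • g i := fun i => by
    rw [← intervalIntegral.integral_congr_Ioo_of_le (edge_le i) (floor_eq i),
      intervalIntegral.integral_const]
    congr 1
    push_cast
    ring
  have integrable_edge : ∀ i < k, IntervalIntegrable (fun τ => g ⌊τ / h⌋₊) volume
      (i * h) ((i + 1 : ℕ) * h) := fun i _ =>
    (intervalIntegrable_const (c := g i)).congr_uIoo
      (by rw [uIoo_of_le (edge_le i)]; exact floor_eq i)
  rw [Finset.smul_sum, ← Finset.sum_congr rfl fun i _ => integral_edge i,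
    intervalIntegral.sum_integral_adjacent_intervals integrable_edge, Nat.cast_zero, zero_mul]

variable {α : Type*} {l : Filter α} {h : α → ℝ}

theorem tendsto_smul_sum_range [CompleteSpace E] [l.IsCountablyGenerated] {C t : ℝ}
    {g : α → ℕ → E} {u : ℝ → E} (hg : ∀ a i, ‖g a i‖ ≤ C) (hh : Tendsto h l (𝓝[>] 0))
    {k : α → ℕ} (hk : Tendsto (fun a => (k a : ℝ) * h a) l (𝓝 t)) (ht : 0 ≤ t)
    (hu : ∀ s ∈ Ioc 0 t, Tendsto (fun a => g a ⌊s / h a⌋₊) l (𝓝 (u s))) :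
    Tendsto (fun a => h a • ∑ i ∈ Finset.range (k a), g a i) l (𝓝 (∫ τ in (0 : ℝ)..t, u τ)) := by
  have measurable : ∀ a, StronglyMeasurable fun τ => g a ⌊τ / h a⌋₊ := fun a =>
    StronglyMeasurable.of_discrete.comp_measurable (by fun_prop)
  have up_to_limit : Tendsto (fun a => ∫ τ in (0 : ℝ)..t, g a ⌊τ / h a⌋₊) l
      (𝓝 (∫ τ in (0 : ℝ)..t, u τ)) := by
    refine intervalIntegral.tendsto_integral_filter_of_dominated_convergence (fun _ => C) ?_ ?_
      intervalIntegrable_const ?_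
    · exact .of_forall fun a => (measurable a).aestronglyMeasurable
    · exact .of_forall fun a => .of_forall fun τ _ => hg a _
    · refine .of_forall fun τ hτ => hu τ ?_
      rwa [uIoc_of_le ht] at hτ
  have remainder : Tendsto (fun a => ∫ τ in t..k a * h a, g a ⌊τ / h a⌋₊) l (𝓝 0) := by
    have bound := (hk.sub_const t).abs.const_mul C
    rw [sub_self, abs_zero, mul_zero] at bound
    exact squeeze_zero_norm (fun a =>
      intervalIntegral.norm_integral_le_of_norm_le_const fun τ _ => hg a _) bound
  have integrable : ∀ a b c, IntervalIntegrable (fun τ => g a ⌊τ / h a⌋₊) volume b c :=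
    fun a b c => (intervalIntegrable_const (c := C)).mono_fun (measurable a).aestronglyMeasurable
      (.of_forall fun τ => (hg a _).trans (Real.le_norm_self C))
  rw [← add_zero (∫ τ in (0 : ℝ)..t, u τ)]
  refine (up_to_limit.add remainder).congr' ?_
  filter_upwards [hh.eventually self_mem_nhdsWithin] with a (ha : 0 < h a)
  rw [intervalIntegral.integral_add_adjacent_intervals (integrable a _ _) (integrable a _ _),
    smul_sum_range_eq_integral ha]

theorem IsC0Semigroup.tendsto_smul_sum_pow_apply [CompleteSpace E] [l.IsCountablyGenerated]
    {B : α → E →L[ℝ] E} {M : ℝ} {S : ℝ → E →L[ℝ] E} (hS : IsC0Semigroup S)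
    (hB : ∀ a k, ‖B a ^ k‖ ≤ M) (hh : Tendsto h l (𝓝[>] 0))
    (hG : ∀ x y, GenLimitAt S x y → (x, y) ∈ closure (limitGraph l B h))
    (hdense : Dense {x | ∃ y, GenLimitAt S x y}) {t : ℝ} (ht : 0 ≤ t) {k : α → ℕ}
    (hk : Tendsto (fun a => (k a : ℝ) * h a) l (𝓝 t)) (x : E) :
    Tendsto (fun a => h a • (∑ i ∈ Finset.range (k a), B a ^ i) x) l
      (𝓝 (∫ τ in (0 : ℝ)..t, S τ x)) := by
  simp only [sum_apply]
  exact tendsto_smul_sum_range (fun a i => (B a ^ i).le_of_opNorm_le (hB a i) x) hh hk ht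
    fun s hs => hS.tendsto_pow_apply hB hh hG hdense hs.1.le
      (tendsto_floor_div_mul_self hh hs.1.le) x

end RiemannSum

section EvolutionSystem

variable {ι} {T M ω : ℝ}

namespace IsDeterminedEvolSystem

section Single

variable {b : ℝ → V →L[ℝ] E} {R : ℝ → ℝ → E →L[ℝ] E}

theorem norm_le (hR : IsDeterminedEvolSystem ι T b M ω R) {s : ℝ} (hs : s ∈ Icc 0 T) :
    ‖R T s‖ ≤ M * Real.exp (|ω| * T) := by
  have bound := hR.2.1 s T hs.1 hs.2 le_rfl
  have M_nonneg : 0 ≤ M :=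
    nonneg_of_mul_nonneg_left ((norm_nonneg _).trans bound) (Real.exp_pos _)
  refine bound.trans ?_
  gcongr
  · linarith [hs.2]
  · exact le_abs_self ω
  · linarith [hs.1]

theorem hasDerivWithinAt_apply (hR : IsDeterminedEvolSystem ι T b M ω R) (v : V) {s : ℝ}
    (hs : s ∈ Icc 0 T) :
    HasDerivWithinAt (fun r => R T r (ι v)) (-(R T s (b s v))) (Icc 0 T) s :=
  hR.2.2.2 v s T hs.1 hs.2 le_rfl

theorem apply_self (hR : IsDeterminedEvolSystem ι T b M ω R) (hT : 0 ≤ T) (x : E) :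
    R T T x = x := by
  rw [hR.1.refl T (right_mem_Icc.2 hT), one_apply_eq_self]

theorem norm_apply_sub_self_le (hR : IsDeterminedEvolSystem ι T b M ω R) {v : V} {C : ℝ}
    (hC : ∀ s ∈ Icc 0 T, ‖b s v‖ ≤ C) {s : ℝ} (hs : s ∈ Icc 0 T) :
    ‖R T s (ι v) - ι v‖ ≤ M * Real.exp (|ω| * T) * C * (T - s) := by
  have hT : 0 ≤ T := hs.1.trans hs.2
  have deriv_bound : ∀ r ∈ Icc 0 T, ‖-(R T r (b r v))‖ ≤ M * Real.exp (|ω| * T) * C :=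
    fun r hr => by
      rw [norm_neg]
      exact (R T r).le_of_opNorm_le_of_le (hR.norm_le hr) (hC r hr)
  have mean_value := (convex_Icc 0 T).norm_image_sub_le_of_norm_hasDerivWithin_le
    (fun r hr => hR.hasDerivWithinAt_apply v hr) deriv_bound (right_mem_Icc.2 hT) hs
  rwa [hR.apply_self hT, norm_sub_rev s T, Real.norm_of_nonneg (sub_nonneg.2 hs.2)] at mean_value

theorem continuousOn_apply (hR : IsDeterminedEvolSystem ι T b M ω R) {g : ℝ → E}
    (hg : ContinuousOn g (Icc 0 T)) : ContinuousOn (fun s => R T s (g s)) (Icc 0 T) := by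
  intro s hs
  have strong : ContinuousOn (fun r => R T r (g s)) (Icc 0 T) :=
    (hR.1.strong_cont (g s)).comp (f := fun r : ℝ => (T, r)) (by fun_prop)
      fun r hr => ⟨hr.1, hr.2, le_rfl⟩
  have bounded : ∀ᶠ r in 𝓝[Icc 0 T] s, ‖R T r‖ ≤ M * Real.exp (|ω| * T) := by
    filter_upwards [self_mem_nhdsWithin] with r hr using hR.norm_le hr
  exact tendsto_apply_of_tendsto bounded (hg s hs) (strong s hs)

theorem apply_sub_self_eq_integral [CompleteSpace E] (hR : IsDeterminedEvolSystem ι T b M ω R)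
    (hT : 0 ≤ T) {v : V} (hb : ContinuousOn (fun s => b s v) (Icc 0 T)) :
    R T 0 (ι v) - ι v = ∫ s in (0 : ℝ)..T, R T s (b s v) := by
  have ftc := intervalIntegral.integral_eq_sub_of_hasDerivAt_of_le hT
    (fun r hr => (hR.hasDerivWithinAt_apply v hr).continuousWithinAt)
    (fun r hr => (hR.hasDerivWithinAt_apply v (Ioo_subset_Icc_self hr)).hasDerivAt
      (Icc_mem_nhds hr.1 hr.2))
    ((hR.continuousOn_apply hb).neg.intervalIntegrable_of_Icc hT)
  rw [intervalIntegral.integral_neg, hR.apply_self hT] at ftc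
  rw [← neg_sub, ← ftc, neg_neg]

end Single

section Family

variable {α : Type*} {l : Filter α} {lam : α → ℝ} {b : α → ℝ → V →L[ℝ] E}
  {R : α → ℝ → ℝ → E →L[ℝ] E}

theorem tendsto_apply_self
    (hR : ∀ a, IsDeterminedEvolSystem ι T (fun s => lam a • b a s) M ω (R a))
    (hι : DenseRange ι) (hlam : Tendsto lam l (𝓝 0))
    (hb : ∀ v, ∃ C, ∀ a, ∀ s ∈ Icc 0 T, ‖b a s v‖ ≤ C) {s : ℝ} (hs : s ∈ Icc 0 T) (x : E) :
    Tendsto (fun a => R a T s x) l (𝓝 x) := by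
  refine tendsto_apply_of_dense (L' := 1) (fun a => (hR a).norm_le hs) hι ?_ x
  rintro _ ⟨v, rfl⟩
  obtain ⟨C, hC⟩ := hb v
  have bound := ((hlam.norm.mul_const C).const_mul (M * Real.exp (|ω| * T))).mul_const (T - s)
  rw [norm_zero, zero_mul, mul_zero, zero_mul] at bound
  refine tendsto_iff_norm_sub_tendsto_zero.2 (squeeze_zero (fun a => norm_nonneg _) (fun a => ?_)
    bound)
  refine (hR a).norm_apply_sub_self_le (fun r hr => ?_) hs
  rw [smul_apply, norm_smul]
  gcongr
  exact hC a r hr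

theorem tendsto_inv_smul_apply_sub_self [CompleteSpace E] [l.IsCountablyGenerated]
    (hR : ∀ a, IsDeterminedEvolSystem ι T (fun s => lam a • b a s) M ω (R a))
    (hT : 0 ≤ T) (hι : DenseRange ι) (hlam : Tendsto lam l (𝓝[≠] 0))
    (hb : ∀ v, ∃ C, ∀ a, ∀ s ∈ Icc 0 T, ‖b a s v‖ ≤ C) {v : V} {g : ℝ → E}
    (hcont : ∀ a, ContinuousOn (fun s => b a s v) (Icc 0 T))
    (hg : ∀ s ∈ Icc 0 T, Tendsto (fun a => b a s v) l (𝓝 (g s))) :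
    Tendsto (fun a => (lam a)⁻¹ • (R a T 0 (ι v) - ι v)) l (𝓝 (∫ s in (0 : ℝ)..T, g s)) := by
  have lam_zero : Tendsto lam l (𝓝 0) := hlam.mono_right nhdsWithin_le_nhds
  obtain ⟨C, hC⟩ := hb v
  have integral_lim : Tendsto (fun a => ∫ s in (0 : ℝ)..T, R a T s (b a s v)) l
      (𝓝 (∫ s in (0 : ℝ)..T, g s)) := by
    refine intervalIntegral.tendsto_integral_filter_of_dominated_convergence
      (fun _ => M * Real.exp (|ω| * T) * C) ?_ ?_ intervalIntegrable_const ?_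
    · refine .of_forall fun a => ?_
      rw [uIoc_of_le hT]
      exact (((hR a).continuousOn_apply (hcont a)).mono
        Ioc_subset_Icc_self).aestronglyMeasurable measurableSet_Ioc
    · refine .of_forall fun a => .of_forall fun s hs => ?_
      rw [uIoc_of_le hT] at hs
      have hs' := Ioc_subset_Icc_self hs
      exact (R a T s).le_of_opNorm_le_of_le ((hR a).norm_le hs') (hC a s hs')
    · refine .of_forall fun s hs => ?_
      rw [uIoc_of_le hT] at hs
      have hs' := Ioc_subset_Icc_self hs
      exact tendsto_apply_of_tendsto (.of_forall fun a => (hR a).norm_le hs') (hg s hs')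
        (tendsto_apply_self hR hι lam_zero hb hs' _)
  refine integral_lim.congr' ?_
  filter_upwards [hlam.eventually self_mem_nhdsWithin] with a (ha : lam a ≠ 0)
  rw [(hR a).apply_sub_self_eq_integral hT ((hcont a).const_smul (lam a))]
  simp only [smul_apply, map_smul, intervalIntegral.integral_smul, inv_smul_smul₀ ha]

theorem tendsto_smul_sum_pow [CompleteSpace E] [l.IsCountablyGenerated]
    (hR : ∀ a, IsDeterminedEvolSystem ι T (fun s => lam a • b a s) M ω (R a))
    (hT : 0 < T) (hι : DenseRange ι) (hlam : Tendsto lam l (𝓝[>] 0))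
    {C : ℝ} (hpow : ∀ a k, ‖R a T 0 ^ k‖ ≤ C)
    (hb : ∀ v, ∃ C, ∀ a, ∀ s ∈ Icc 0 T, ‖b a s v‖ ≤ C)
    (hcont : ∀ v a, ContinuousOn (fun s => b a s v) (Icc 0 T)) {g : ℝ → V → E}
    (hg : ∀ v, ∀ s ∈ Icc 0 T, Tendsto (fun a => b a s v) l (𝓝 (g s v)))
    {f : E → E} (hf : ∀ v, f (ι v) = (1 / T) • ∫ s in (0 : ℝ)..T, g s v)
    {D' : Set E} {A' : E → E} {S : ℝ → E →L[ℝ] E} (hclos : IsClosureOf D' A' (range ι) f)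
    (hS : IsC0Semigroup S) (hgen : IsGeneratorOf D' A' S) {ε : ℝ} (hε : 0 ≤ ε) {k : α → ℕ}
    (hk : Tendsto (fun a => (k a : ℝ) * lam a) l (𝓝 ε)) (x : E) :
    Tendsto (fun a => lam a • (∑ i ∈ Finset.range (k a), R a T 0 ^ i) x) l
      (𝓝 ((1 / T) • ∫ τ in (0 : ℝ)..ε * T, S τ x)) := by
  have graph_subset : opGraph (range ι) f ⊆ limitGraph l (fun a => R a T 0) fun a => T * lam a := by
    rintro ⟨z, y⟩ ⟨⟨v, rfl : ι v = z⟩, rfl : y = f (ι v)⟩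
    have quotient_lim := (tendsto_inv_smul_apply_sub_self hR hT.le hι
      (hlam.mono_right (nhdsGT_le_nhdsNE 0)) hb (hcont v) (hg v)).const_smul (1 / T)
    simpa only [limitGraph, mem_ofPred_eq, mul_inv, mul_smul, one_div, hf] using quotient_lim
  have step_lim : Tendsto (fun a => T * lam a) l (𝓝[>] 0) := by
    refine tendsto_nhdsWithin_iff.2
      ⟨by simpa using (hlam.mono_right nhdsWithin_le_nhds).const_mul T, ?_⟩
    filter_upwards [hlam.eventually self_mem_nhdsWithin] with a ha using mul_pos hT ha
  have dense_generator_domain : Dense {x | ∃ y, GenLimitAt S x y} :=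
    hι.mono fun z hz => (hgen.1 z).1 (hclos.subset hz)
  have time_lim : Tendsto (fun a => (k a : ℝ) * (T * lam a)) l (𝓝 (ε * T)) :=
    (hk.mul_const T).congr fun a => by ring
  refine ((hS.tendsto_smul_sum_pow_apply hpow step_lim
    (fun z y hzy => closure_mono graph_subset (hgen.mem_closure_opGraph hclos hzy))
    dense_generator_domain (by positivity) time_lim x).const_smul (1 / T)).congr fun a => ?_
  rw [mul_smul, one_div, inv_smul_smul₀ hT.ne']

end Family

end IsDeterminedEvolSystem

theorem smul_average_apply_sub_smul_eq [CompleteSpace E] (hT : 0 < T) {b : ℝ → V →L[ℝ] E}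
    (hb : ContinuousOn b (Icc 0 T)) (mu : ℝ) (v : V) :
    (1 - mu) • ((1 / T) • ∫ τ in (0 : ℝ)..T, b τ) v - mu • ι v
      = (1 / T) • ∫ s in (0 : ℝ)..T, ((1 - mu) • b s v - mu • ι v) := by
  have hb_int : IntervalIntegrable b volume 0 T := hb.intervalIntegrable_of_Icc hT.le
  have hbv_int : IntervalIntegrable (fun s => b s v) volume 0 T :=
    (hb.clm_apply continuousOn_const).intervalIntegrable_of_Icc hT.le
  have hbv_smul_int : IntervalIntegrable (fun s => (1 - mu) • b s v) volume 0 T :=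
    hbv_int.smul (1 - mu)
  rw [intervalIntegral.integral_sub hbv_smul_int intervalIntegrable_const,
    intervalIntegral.integral_smul, intervalIntegral.integral_const, smul_apply,
    ContinuousLinearMap.intervalIntegral_apply hb_int, sub_zero, smul_sub, one_div,
    inv_smul_smul₀ hT.ne', smul_comm]

end EvolutionSystem

theorem statement_12_general {E : Type*} [NormedAddCommGroup E] [NormedSpace ℝ E] [CompleteSpace E]
    {V : Type*} [NormedAddCommGroup V] [NormedSpace ℝ V]
    (ι : V →L[ℝ] E) (hι : DenseRange ι) (T : ℝ) (hT : 0 < T)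
    (b : ℝ → V →L[ℝ] E) (hb : ContinuousOn b (Icc 0 T)) (mu0 : ℝ)
    (f : E → E)
    (hf : ∀ v : V, f (ι v) = (1 - mu0) • ((1 / T) • ∫ τ in (0 : ℝ)..T, b τ) v - mu0 • ι v)
    (D' : Set E) (A' : E → E) (S : ℝ → E →L[ℝ] E)
    (hclos : IsClosureOf D' A' (range ι) f)
    (hS : IsC0Semigroup S) (hgenS : IsGeneratorOf D' A' S)
    (kn : ℕ → ℕ) (lamn mun : ℕ → ℝ) (ε : ℝ) (hlampos : ∀ n, 0 < lamn n)
    (hkn : Tendsto kn atTop atTop)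
    (hknlam : Tendsto (fun n => (kn n : ℝ) * lamn n) atTop (𝓝 ε))
    (hmu : Tendsto mun atTop (𝓝 mu0))
    (R : ℕ → ℝ → ℝ → E →L[ℝ] E)
    (hR : ∀ n, IsDeterminedEvolSystem ι T
      (fun s => lamn n • ((1 - mun n) • b s - mun n • ι)) 1 0 (R n)) (x : E) :
    Tendsto (fun n => lamn n • (∑ i ∈ Finset.range (kn n), R n T 0 ^ i) x)
      atTop (𝓝 ((1 / T) • ∫ τ in (0 : ℝ)..(ε * T), S τ x)) := by
  have lam_zero : Tendsto lamn atTop (𝓝 0) := by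
    refine (hknlam.div_atTop (tendsto_natCast_atTop_atTop.comp hkn)).congr' ?_
    filter_upwards [hkn.eventually_ne_atTop 0] with n hn
    exact mul_div_cancel_left₀ _ (Nat.cast_ne_zero.2 hn)
  have contraction : ∀ n k, ‖R n T 0 ^ k‖ ≤ 1 := fun n k =>
    norm_pow_le_one (by simpa using (hR n).norm_le (left_mem_Icc.2 hT.le)) k
  have mu_bounded : ∃ N, ∀ n, ‖mun n‖ ≤ N := by simpa [bddAbove_def] using hmu.norm.bddAbove_range
  obtain ⟨N, hN⟩ := mu_bounded
  obtain ⟨K, hK⟩ := isCompact_Icc.exists_bound_of_continuousOn hb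
  have bounded : ∀ v, ∃ C, ∀ n, ∀ s ∈ Icc 0 T, ‖((1 - mun n) • b s - mun n • ι) v‖ ≤ C := by
    refine fun v => ⟨(1 + N) * (K * ‖v‖) + N * ‖ι v‖, fun n s hs => ?_⟩
    have N_nonneg : 0 ≤ N := (norm_nonneg _).trans (hN n)
    have one_sub_le : ‖1 - mun n‖ ≤ 1 + N := norm_sub_le_of_le norm_one.le (hN n)
    rw [sub_apply, smul_apply, smul_apply]
    refine norm_sub_le_of_le ?_ ?_ <;> rw [norm_smul] <;> gcongr
    exacts [(b s).le_of_opNorm_le (hK s hs) v, hN n]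
  exact IsDeterminedEvolSystem.tendsto_smul_sum_pow hR hT hι
    (tendsto_nhdsWithin_iff.2 ⟨lam_zero, .of_forall hlampos⟩) contraction bounded
    (fun v n => ((hb.clm_apply continuousOn_const).const_smul _).sub continuousOn_const)
    (fun v s _ => ((hmu.const_sub 1).smul_const _).sub (hmu.smul_const _))
    (fun v => (hf v).trans (smul_average_apply_sub_smul_eq hT hb mu0 v)) hclos hS hgenS
    (ge_of_tendsto' hknlam fun n => mul_nonneg (kn n).cast_nonneg (hlampos n).le) hknlam x

/-- Lemma 5(iii): with `A^{(μ)}(t) := −μI + (1−μ)A(t)` and `R^{(μ,λ)}` the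
evolution system of `{λA^{(μ)}(t)}`, if `kₙ → ∞`, `kₙλₙ → ε > 0` and `μₙ → μ₀`, then
`λₙ(I + R^{(μₙ,λₙ)}(T,0) + ⋯ + R^{(μₙ,λₙ)}(T,0)^{kₙ−1}) x → (1/T)∫₀^{εT} S_{cl(A₀^{(μ₀)})}(τ)x dτ`
for every `x ∈ E`. -/
theorem statement_12
    {E : Type*} [NormedAddCommGroup E] [NormedSpace ℝ E] [CompleteSpace E]
    [TopologicalSpace.SeparableSpace E]
    {V : Type*} [NormedAddCommGroup V] [NormedSpace ℝ V] [CompleteSpace V]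
    (ι : V →L[ℝ] E) (hιinj : Function.Injective ι) (hιdense : DenseRange ι)
    (T : ℝ) (hT : 0 < T)
    (A : HypData E V) (ω MV ωV : ℝ)
    (hgen : HypGen T A)
    (h1 : Hyp1' T A ω)
    (h2 : Hyp2 ι T A MV ωV)
    (h3 : Hyp3 ι T A)
    (h4 : Hyp4 ι T A ω)
    -- `RR mu lam` is the evolution system determined by `{λ A^{(μ)}(t)}`
    (RR : ℝ → ℝ → ℝ → ℝ → E →L[ℝ] E)
    (hRR : ∀ mu ∈ Icc (0 : ℝ) 1, ∀ lam > (0 : ℝ),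
      IsDeterminedEvolSystem ι T
        (fun s => lam • ((1 - mu) • A.bdd s - mu • ι)) 1 0 (RR mu lam))
    (mu0 : ℝ) (hmu0 : mu0 ∈ Icc (0 : ℝ) 1)
    -- `f` represents `A₀^{(μ₀)} = (1/T)∫₀ᵀ A^{(μ₀)}(τ)dτ` with domain `ι(V)`,
    -- `(D',A')` is its closure and `S` the C₀ semigroup generated by the closure
    (f : E → E)
    (hf : ∀ v : V, f (ι v) = (1 - mu0) • timeAvg T A v - mu0 • ι v)
    (D' : Set E) (A' : E → E) (S : ℝ → E →L[ℝ] E)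
    (hclos : IsClosureOf D' A' (Set.range ι) f)
    (hS : IsC0Semigroup S) (hgenS : IsGeneratorOf D' A' S)
    -- the sequences
    (kn : ℕ → ℕ) (lamn mun : ℕ → ℝ) (ε : ℝ) (hε : 0 < ε)
    (hlampos : ∀ n, 0 < lamn n) (hmun : ∀ n, mun n ∈ Icc (0 : ℝ) 1)
    (hkn : Tendsto kn atTop atTop)
    (hknlam : Tendsto (fun n => (kn n : ℝ) * lamn n) atTop (𝓝 ε))
    (hmu : Tendsto mun atTop (𝓝 mu0)) :
    ∀ x : E, Tendsto
      (fun n => lamn n • (∑ i ∈ Finset.range (kn n), RR (mun n) (lamn n) T 0 ^ i) x)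
      atTop (𝓝 ((1 / T) • ∫ τ in (0 : ℝ)..(ε * T), S τ x)) := by
  exact statement_12_general ι hιdense T hT A.bdd h3.2 mu0 f hf D' A' S hclos hS hgenS kn lamn mun ε
    hlampos hkn hknlam hmu _ fun n => hRR (mun n) (hmun n) (lamn n) (hlampos n)
end
end

section
/- Let T>0, E a separable Banach space, V a Banach space densely and continuously embedded in E, {A(t)}_{t∈[0,T]} a family of linear operators on E satisfying (Hyp'1) with constant ω>0 and (Hyp2)–(Hyp5), and F:[0,T]×E→E a continuous map satisfying (F1)–(F4) with k∈[0,ω). For λ>0 and x∈E let u(·;x,λ) be the unique mild solution of u'(t)=λA(t)u(t)+λF(t,u(t)) on [0,T] with u(0)=x, and set Φ_T^{(λ)}(x):=u(T;x,λ). Call x₀∈E a branching point if there exist sequences (x_n) in E and (λ_n) in (0,∞) with λ_n→0, x_n→x₀ and Φ_T^{(λ_n)}(x_n)=x_n for all n. Let Â be the closure of A_0 := (1/T)∫_0^T A(τ)dτ (with domain V) and define F̂:E→E by F̂(x) := (1/T)∫_0^T F(τ,x)dτ. Then every branching point x₀ belongs to D(Â) and satisfies Âx₀ + F̂(x₀)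 = 0. -/
open Filter Topology Set MeasureTheory

noncomputable section

variable {E : Type*} [NormedAddCommGroup E] [NormedSpace ℝ E]

variable {V : Type*} [NormedAddCommGroup V] [NormedSpace ℝ V]

variable (ι : V →L[ℝ] E)

/-
Write `h = λT`. Since `‖R^{(λ)}(T, 0)‖ ≤ e^{-ωh}`, the difference quotients
`h⁻¹(R^{(λ)}(T, 0) - I)` are quasi-dissipative with exponents tending to `-ω` as `λ → 0`, so their
extended limit `L` is a quasi-dissipative linear relation. It contains the graph of `A₀`, because
`R^{(λ)}(T, 0)v - v = λ ∫ R^{(λ)}(T, s)A(s)v ds` and `R^{(λ)} → I` strongly. It also contains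
`(x₀, -F̂(x₀))`: the solutions `u(·; x_n, λ_n)` converge uniformly to the constant `x₀`, and
periodicity says that `R^{(λ)}(T, 0)x_n - x_n = -λ ∫ R^{(λ)}(T, s)F(s, u(s)) ds`. Density of the
range of `μ₀ - A₀` for some `μ₀ > -ω` confines `L` to the closure of the graph of `A₀`, and that
closure is single-valued, being quasi-dissipative with dense domain.
-/

variable {ι}

section BoundedFamilies

variable {α κ F : Type*} [NormedAddCommGroup F] [NormedSpace ℝ F]
  {l : Filter α} {L : α → E →L[ℝ] F} {K : ℝ}

theorem tendsto_apply_of_eventually_norm_le (hK : ∀ᶠ i in l, ‖L i‖ ≤ K)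
    {u : α → E} {x : E} {y : F} (hL : Tendsto (fun i => L i x) l (𝓝 y))
    (hu : Tendsto u l (𝓝 x)) : Tendsto (fun i => L i (u i)) l (𝓝 y) := by
  have hbound : Tendsto (fun i => K * ‖u i - x‖) l (𝓝 0) := by
    simpa using (tendsto_iff_norm_sub_tendsto_zero.1 hu).const_mul K
  have hdiff : Tendsto (fun i => L i (u i - x)) l (𝓝 0) :=
    squeeze_zero_norm' (hK.mono fun i hi => (L i).le_of_opNorm_le hi _) hbound
  simpa using hdiff.add hL

theorem tendsto_apply_of_denseRange (hK : ∀ᶠ i in l, ‖L i‖ ≤ K) {P : E →L[ℝ] F}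
    {e : κ → E} (he : DenseRange e) (hL : ∀ k, Tendsto (fun i => L i (e k)) l (𝓝 (P (e k))))
    (x : E) : Tendsto (fun i => L i x) l (𝓝 (P x)) := by
  rw [Metric.tendsto_nhds]
  intro ε hε
  have hcont : Continuous fun y => K * ‖x - y‖ + ‖P y - P x‖ := by fun_prop
  obtain ⟨k, hk⟩ : ∃ k, K * ‖x - e k‖ + ‖P (e k) - P x‖ < ε / 2 :=
    he.exists_mem_open (isOpen_lt hcont continuous_const) ⟨x, by simpa using half_pos hε⟩
  filter_upwards [hK, Metric.tendsto_nhds.1 (hL k) (ε / 2) (half_pos hε)] with i hKi hi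
  have hLi : dist (L i x) (L i (e k)) ≤ K * ‖x - e k‖ := by
    rw [dist_eq_norm, ← map_sub]
    exact (L i).le_of_opNorm_le hKi _
  calc dist (L i x) (P x)
      ≤ dist (L i x) (L i (e k)) + dist (L i (e k)) (P (e k)) + dist (P (e k)) (P x) :=
        dist_triangle4 ..
    _ < ε := by
        rw [dist_eq_norm (P (e k))]
        linarith

end BoundedFamilies

section QuasiDissipative

variable {α : Type*} {l : Filter α} {G L : Submodule ℝ (E × E)} {ω : ℝ}

/-- A linear relation `G` on `E` is quasi-dissipative with exponent `ω` when `G - ω` is dissipative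
in the sense of Lumer and Phillips. Operators are encoded by their graphs, so that closures and
limits of operators, which need not be single-valued, are covered. -/
def IsQuasiDissipative (ω : ℝ) (G : Submodule ℝ (E × E)) : Prop :=
  ∀ p ∈ G, ∀ μ : ℝ, (μ - ω) * ‖p.1‖ ≤ ‖μ • p.1 - p.2‖

/-- The extended limit (in the sense of Trotter and Kurtz) of bounded operators `B i` along `l`:
the relation of all pairs `(lim x i, lim B i (x i))`. -/
def extendedLimit (l : Filter α) (B : α → E →L[ℝ] E) : Submodule ℝ (E × E) where
  carrier := {p | ∃ x : α → E, Tendsto x l (𝓝 p.1) ∧ Tendsto (fun i => B i (x i)) l (𝓝 p.2)}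
  zero_mem' := ⟨0, tendsto_const_nhds, by simpa using tendsto_const_nhds⟩
  add_mem' := by
    rintro p q ⟨x, hx, hBx⟩ ⟨y, hy, hBy⟩
    exact ⟨x + y, hx.add hy, by simpa using hBx.add hBy⟩
  smul_mem' := by
    rintro c p ⟨x, hx, hBx⟩
    exact ⟨c • x, hx.const_smul c, by simpa using hBx.const_smul c⟩

theorem isQuasiDissipative_extendedLimit [l.NeBot] {B : α → E →L[ℝ] E} {c : α → ℝ}
    (hB : ∀ i, IsQuasiDissipative (c i) (B i).toLinearMap.graph) (hc : Tendsto c l (𝓝 ω)) :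
    IsQuasiDissipative ω (extendedLimit l B) := by
  rintro p ⟨x, hx, hBx⟩ μ
  exact le_of_tendsto_of_tendsto' ((hc.const_sub μ).mul hx.norm)
    ((hx.const_smul μ).sub hBx).norm fun i => hB i (x i, B i (x i)) rfl μ

theorem isQuasiDissipative_graph_smul_sub_one {S : E →L[ℝ] E} {θ h : ℝ} (hS : ‖S‖ ≤ θ)
    (hh : 0 < h) : IsQuasiDissipative ((θ - 1) / h) (h⁻¹ • (S - 1)).toLinearMap.graph := by
  rintro ⟨x, y⟩ (rfl : y = h⁻¹ • (S x - x)) μ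
  have hSx : ‖h⁻¹ • S x‖ ≤ h⁻¹ * (θ * ‖x‖) := by
    rw [norm_smul, Real.norm_of_nonneg (inv_nonneg.2 hh.le)]
    exact mul_le_mul_of_nonneg_left (S.le_of_opNorm_le hS x) (inv_nonneg.2 hh.le)
  calc (μ - (θ - 1) / h) * ‖x‖
      = (μ + h⁻¹) * ‖x‖ - h⁻¹ * (θ * ‖x‖) := by ring
    _ ≤ ‖(μ + h⁻¹) • x‖ - ‖h⁻¹ • S x‖ := by
        rw [norm_smul]
        gcongr
        exact le_abs_self _
    _ ≤ ‖(μ + h⁻¹) • x - h⁻¹ • S x‖ := norm_sub_norm_le _ _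
    _ = ‖μ • x - h⁻¹ • (S x - x)‖ := by
        congr 1
        module

theorem isQuasiDissipative_extendedLimit_smul_sub_one [l.NeBot] {S : α → E →L[ℝ] E} {h : α → ℝ}
    (hS : ∀ i, ‖S i‖ ≤ Real.exp (ω * h i)) (hpos : ∀ i, 0 < h i) (hh : Tendsto h l (𝓝 0)) :
    IsQuasiDissipative ω (extendedLimit l fun i => (h i)⁻¹ • (S i - 1)) := by
  have hderiv : HasDerivAt (fun t => Real.exp (ω * t)) ω 0 := by
    simpa using ((hasDerivAt_id (0 : ℝ)).const_mul ω).exp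
  have hh' : Tendsto h l (𝓝[≠] 0) :=
    tendsto_nhdsWithin_iff.2 ⟨hh, Eventually.of_forall fun i => (hpos i).ne'⟩
  have hexponent : Tendsto (fun i => (Real.exp (ω * h i) - 1) / h i) l (𝓝 ω) := by
    refine (hderiv.tendsto_slope_zero.comp hh').congr fun i => ?_
    simp [div_eq_inv_mul]
  exact isQuasiDissipative_extendedLimit
    (fun i => isQuasiDissipative_graph_smul_sub_one (hS i) (hpos i)) hexponent

theorem IsQuasiDissipative.mono (hL : IsQuasiDissipative ω L) (h : G ≤ L) :
    IsQuasiDissipative ω G :=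
  fun p hp => hL p (h hp)

theorem IsQuasiDissipative.topologicalClosure (hG : IsQuasiDissipative ω G) :
    IsQuasiDissipative ω G.topologicalClosure := fun _ hp μ =>
  closure_minimal (t := {p : E × E | (μ - ω) * ‖p.1‖ ≤ ‖μ • p.1 - p.2‖}) (fun p hp => hG p hp μ)
    (isClosed_le (by fun_prop) (by fun_prop)) hp

/-- The Lumer–Phillips argument: scaling `(x, y) ∈ G` by `h → 0` keeps the perturbation `z` at
order one while the part `h • y` disappears. -/
theorem IsQuasiDissipative.eq_zero_of_zero_mem (hG : IsQuasiDissipative ω G)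
    (hdense : Dense (Prod.fst '' (G : Set (E × E)))) {z : E} (hz : ((0 : E), z) ∈ G) : z = 0 := by
  have hle : ∀ x ∈ Prod.fst '' (G : Set (E × E)), ‖x‖ ≤ ‖x - z‖ := by
    rintro _ ⟨⟨x, y⟩, hxy, rfl⟩
    have hscaled : ∀ h > (0 : ℝ), (1 - h * ω) * ‖x‖ ≤ ‖x - z - h • y‖ := by
      intro h hh
      have hmem : (h • x, z + h • y) ∈ G := by simpa using G.add_mem hz (G.smul_mem h hxy)
      have := hG _ hmem h⁻¹
      rwa [norm_smul, Real.norm_of_nonneg hh.le, ← mul_assoc, sub_mul, inv_mul_cancel₀ hh.ne',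
        smul_smul, inv_mul_cancel₀ hh.ne', one_smul, ← sub_sub, mul_comm ω] at this
    have hleft : Continuous fun h : ℝ => (1 - h * ω) * ‖x‖ := by fun_prop
    have hright : Continuous fun h : ℝ => ‖x - z - h • y‖ := by fun_prop
    simpa using le_of_tendsto_of_tendsto ((hleft.tendsto 0).mono_left nhdsWithin_le_nhds)
      ((hright.tendsto 0).mono_left nhdsWithin_le_nhds)
      (eventually_nhdsWithin_of_forall (s := Ioi 0) hscaled)
  have hz_le : ‖z‖ ≤ ‖z - z‖ :=
    closure_minimal (t := {x | ‖x‖ ≤ ‖x - z‖}) hle (isClosed_le (by fun_prop) (by fun_prop))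
      (hdense z)
  simpa using hz_le

theorem IsQuasiDissipative.le_topologicalClosure_of_dense (hL : IsQuasiDissipative ω L)
    (hGL : G ≤ L) {μ : ℝ} (hμ : ω < μ)
    (hdense : Dense ((fun p : E × E => μ • p.1 - p.2) '' (G : Set (E × E)))) :
    L ≤ G.topologicalClosure := by
  rintro ⟨x, y⟩ hxy
  obtain ⟨w, hwmem, hw⟩ := mem_closure_iff_seq_limit.1 (hdense (μ • x - y))
  choose p hpG hpw using hwmem
  have hp₁ : Tendsto (fun n => (p n).1) atTop (𝓝 x) := by
    have hbound : Tendsto (fun n => (μ - ω)⁻¹ * ‖w n - (μ • x - y)‖) atTop (𝓝 0) := by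
      simpa using (tendsto_iff_norm_sub_tendsto_zero.1 hw).const_mul (μ - ω)⁻¹
    refine tendsto_iff_norm_sub_tendsto_zero.2
      (squeeze_zero (fun _ => norm_nonneg _) (fun n => ?_) hbound)
    rw [le_inv_mul_iff₀ (sub_pos.2 hμ), ← hpw]
    refine (hL _ (L.sub_mem (hGL (hpG n)) hxy) μ).trans_eq (congrArg norm ?_)
    simp only [Prod.fst_sub, Prod.snd_sub, smul_sub]
    abel
  have hp₂ : Tendsto (fun n => (p n).2) atTop (𝓝 y) := by
    simpa [← hpw] using (hp₁.const_smul μ).sub hw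
  exact mem_closure_of_tendsto (hp₁.prodMk_nhds hp₂) (Eventually.of_forall hpG)

end QuasiDissipative

section ClosureOfOperator

variable {A₀ : V →L[ℝ] E} {f : E → E}

theorem opGraph_range_eq_range_prod (hf : ∀ v, f (ι v) = A₀ v) :
    opGraph (range ι) f = LinearMap.range (ι.prod A₀).toLinearMap := by
  ext ⟨x, y⟩
  constructor
  · rintro ⟨⟨v, rfl⟩, hy⟩
    exact ⟨v, Prod.ext rfl ((hf v).symm.trans hy.symm)⟩
  · rintro ⟨v, hv⟩
    obtain ⟨rfl, rfl⟩ := Prod.ext_iff.1 hv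
    exact ⟨⟨v, rfl⟩, (hf v).symm⟩

theorem IsClosureOf.mem_and_eq_of_isQuasiDissipative {D : Set E} {A : E → E}
    (hA : IsClosureOf D A (range ι) f) (hf : ∀ v, f (ι v) = A₀ v) (hι : DenseRange ι)
    {ω μ : ℝ} (hμ : ω < μ) (hdense : Dense (range fun v => μ • ι v - A₀ v))
    {L : Submodule ℝ (E × E)} (hL : IsQuasiDissipative ω L) (hAL : ∀ v, (ι v, A₀ v) ∈ L)
    {x y : E} (hxy : (x, y) ∈ L) : x ∈ D ∧ A x = y := by
  set G : Submodule ℝ (E × E) := LinearMap.range (ι.prod A₀).toLinearMap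
  have hclosure : closure (opGraph (range ι) f) = G.topologicalClosure := by
    rw [opGraph_range_eq_range_prod hf, Submodule.topologicalClosure_coe]
  have hGL : G ≤ L := by
    rintro _ ⟨v, rfl⟩
    exact hAL v
  have hxy' : (x, y) ∈ G.topologicalClosure := by
    refine hL.le_topologicalClosure_of_dense hGL hμ (hdense.mono ?_) hxy
    rintro _ ⟨v, rfl⟩
    exact ⟨(ι v, A₀ v), ⟨v, rfl⟩, rfl⟩
  have hdom : Dense (Prod.fst '' (G.topologicalClosure : Set (E × E))) := by
    refine hι.mono ?_
    rintro _ ⟨v, rfl⟩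
    exact ⟨(ι v, A₀ v), G.le_topologicalClosure ⟨v, rfl⟩, rfl⟩
  have hx : x ∈ D := (hA.1 x).2 ⟨y, hclosure ▸ hxy'⟩
  have hAx : (x, A x) ∈ G.topologicalClosure := hclosure.subset (hA.2 x hx)
  refine ⟨hx, sub_eq_zero.1 <|
    (hL.mono hGL).topologicalClosure.eq_zero_of_zero_mem hdom (z := A x - y) ?_⟩
  simpa using G.topologicalClosure.sub_mem hAx hxy'

end ClosureOfOperator

section EvolutionSystem

variable {T M K ω : ℝ} {R : ℝ → ℝ → E →L[ℝ] E} {B : ℝ → V →L[ℝ] E}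

theorem IsEvolutionSystem.continuousOn_apply (hR : IsEvolutionSystem T R)
    (hK : ∀ p ∈ evolDomain T, ‖R p.1 p.2‖ ≤ K) {g : ℝ → E} {t : ℝ} (ht : t ≤ T)
    (hg : ContinuousOn g (Icc 0 t)) : ContinuousOn (fun s => R t s (g s)) (Icc 0 t) := by
  intro s hs
  have hRs : ContinuousOn (fun r => R t r (g s)) (Icc 0 t) :=
    (hR.strong_cont (g s)).comp (f := fun r => (t, r)) (by fun_prop) fun r hr => ⟨hr.1, hr.2, ht⟩
  refine tendsto_apply_of_eventually_norm_le (K := K) ?_ (hRs s hs) (hg s hs)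
  filter_upwards [self_mem_nhdsWithin] with r hr using hK (t, r) ⟨hr.1, hr.2, ht⟩

theorem norm_integral_evol_apply_le (hK : ∀ p ∈ evolDomain T, ‖R p.1 p.2‖ ≤ K) {g : ℝ → E}
    {C s t : ℝ} (hC₀ : 0 ≤ C) (hs : 0 ≤ s) (hst : s ≤ t) (ht : t ≤ T)
    (hg : ∀ r ∈ Ico s t, ‖g r‖ ≤ C) : ‖∫ r in s..t, R t r (g r)‖ ≤ K * C * T := by
  have hK₀ : 0 ≤ K := (norm_nonneg _).trans (hK (t, s) ⟨hs, hst, ht⟩)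
  have hae : ∀ᵐ r, r ∈ uIoc s t → ‖R t r (g r)‖ ≤ K * C := by
    filter_upwards [compl_mem_ae_iff.2 (measure_singleton t)] with r hrt hr
    rw [uIoc_of_le hst] at hr
    exact (R t r).le_of_opNorm_le_of_le (hK (t, r) ⟨hs.trans hr.1.le, hr.2, ht⟩)
      (hg r ⟨hr.1.le, lt_of_le_of_ne hr.2 hrt⟩)
  calc ‖∫ r in s..t, R t r (g r)‖ ≤ K * C * |t - s| :=
        intervalIntegral.norm_integral_le_of_norm_le_const_ae hae
    _ ≤ K * C * T := by
        rw [abs_of_nonneg (sub_nonneg.2 hst)]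
        gcongr
        linarith

theorem IsDeterminedEvolSystem.norm_le_s15 (hR : IsDeterminedEvolSystem ι T B M ω R)
    (hω : |ω| ≤ 1) {p : ℝ × ℝ} (hp : p ∈ evolDomain T) : ‖R p.1 p.2‖ ≤ M * Real.exp T := by
  obtain ⟨hs, hst, ht⟩ := hp
  have hle := hR.2.1 _ _ hs hst ht
  have hM : 0 ≤ M := nonneg_of_mul_nonneg_left ((norm_nonneg _).trans hle) (Real.exp_pos _)
  refine hle.trans (mul_le_mul_of_nonneg_left (Real.exp_le_exp.2 ?_) hM)
  nlinarith [(abs_le.1 hω).2]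

variable [CompleteSpace E]

theorem IsDeterminedEvolSystem.integral_apply (hR : IsDeterminedEvolSystem ι T B M ω R)
    (hK : ∀ p ∈ evolDomain T, ‖R p.1 p.2‖ ≤ K) {v : V}
    (hB : ContinuousOn (fun s => B s v) (Icc 0 T)) {s t : ℝ} (hs : 0 ≤ s) (hst : s ≤ t)
    (ht : t ≤ T) : ∫ r in s..t, R t r (B r v) = R t s (ι v) - ι v := by
  have hderiv : ∀ r ∈ Icc 0 t,
      HasDerivWithinAt (fun r => R t r (ι v)) (-(R t r (B r v))) (Icc 0 t) r :=
    fun r hr => hR.2.2.2 v r t hr.1 hr.2 ht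
  have hsub : Icc s t ⊆ Icc 0 t := Icc_subset_Icc_left hs
  have hcont : ContinuousOn (fun r => R t r (B r v)) (Icc 0 t) :=
    hR.1.continuousOn_apply hK ht (hB.mono (Icc_subset_Icc_right ht))
  have hftc := intervalIntegral.integral_eq_sub_of_hasDerivAt_of_le hst
    (fun r hr => ((hderiv r (hsub hr)).continuousWithinAt.mono hsub))
    (fun r hr => (hderiv r (hsub (Ioo_subset_Icc_self hr))).hasDerivAt
      (Icc_mem_nhds (hs.trans_lt hr.1) hr.2))
    ((hcont.mono hsub).neg.intervalIntegrable_of_Icc hst)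
  rw [intervalIntegral.integral_neg, hR.1.refl t ⟨hs.trans hst, ht⟩] at hftc
  simpa using (neg_eq_iff_eq_neg.1 hftc).trans (neg_sub _ _)

end EvolutionSystem

section MildSolutions

variable {T K lam C t : ℝ} {R : ℝ → ℝ → E →L[ℝ] E} {F : ℝ → E → E} {x : E} {u : ℝ → E}

/-- `u` is a mild solution on `[0, T]` of `u' = λ A(t) u + λ F(t, u)`, `u(0) = x`, where `R` stands
for the evolution system determined by `λ A(t)`. -/
structure IsMildSolution (T : ℝ) (R : ℝ → ℝ → E →L[ℝ] E) (lam : ℝ) (F : ℝ → E → E) (x : E)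
    (u : ℝ → E) : Prop where
  continuousOn : ContinuousOn u (Icc 0 T)
  eq_add_integral : ∀ t ∈ Icc 0 T,
    u t = R t 0 x + lam • ∫ s in (0 : ℝ)..t, R t s (F s (u s))

theorem IsMildSolution.norm_sub_le (hu : IsMildSolution T R lam F x u)
    (hK : ∀ p ∈ evolDomain T, ‖R p.1 p.2‖ ≤ K) (ht : t ∈ Icc 0 T) (hC₀ : 0 ≤ C)
    (hC : ∀ s ∈ Ico 0 t, ‖F s (u s)‖ ≤ C) : ‖u t - R t 0 x‖ ≤ |lam| * (K * C * T) := by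
  rw [hu.eq_add_integral t ht, add_sub_cancel_left, norm_smul, Real.norm_eq_abs]
  gcongr
  exact norm_integral_evol_apply_le hK hC₀ le_rfl ht.1 ht.2 hC

theorem forall_mem_Icc_lt_of_forall_mem_Ico_lt {φ : ℝ → ℝ} {a b ε : ℝ}
    (hφ : ContinuousOn φ (Icc a b))
    (hstep : ∀ t ∈ Icc a b, (∀ s ∈ Ico a t, φ s < ε) → φ t < ε) : ∀ t ∈ Icc a b, φ t < ε := by
  by_contra! hne
  have hcompact : IsCompact (Icc a b ∩ φ ⁻¹' Ici ε) :=
    isCompact_Icc.of_isClosed_subset (hφ.preimage_isClosed_of_isClosed isClosed_Icc isClosed_Ici)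
      inter_subset_left
  obtain ⟨τ, ⟨hτ, hτε⟩, hleast⟩ := hcompact.exists_isLeast hne
  refine (hstep τ hτ fun s hs => ?_).not_ge hτε
  by_contra! hsε
  exact hs.2.not_ge (hleast ⟨⟨hs.1, hs.2.le.trans hτ.2⟩, hsε⟩)

theorem exists_eventually_forall_norm_le {X Y G : Type*} [TopologicalSpace X] [TopologicalSpace Y]
    [SeminormedAddCommGroup G] {s : Set X} (hs : IsCompact s) {f : X → Y → G}
    (hf : ContinuousOn (fun p : X × Y => f p.1 p.2) (s ×ˢ univ)) (y₀ : Y) :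
    ∃ C, 0 ≤ C ∧ ∀ᶠ y in 𝓝 y₀, ∀ x ∈ s, ‖f x y‖ ≤ C := by
  have : CompactSpace s := isCompact_iff_compactSpace.1 hs
  let Φ : C(Y × s, G) := ⟨fun q => f q.2 q.1, hf.comp_continuous
    (f := fun q : Y × s => ((q.2 : X), q.1)) (by fun_prop) fun q => ⟨q.2.2, mem_univ _⟩⟩
  refine ⟨‖Φ.curry y₀‖ + 1, by positivity, ?_⟩
  filter_upwards [Φ.curry.continuous.norm.continuousAt.eventually_lt_const (lt_add_one _)]
    with y hy x hx
  exact ((Φ.curry y).norm_coe_le_norm ⟨x, hx⟩).trans hy.le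

end MildSolutions

section VanishingParameter

variable {α : Type*} {l : Filter α} {T K M : ℝ} {R : α → ℝ → ℝ → E →L[ℝ] E}

/-- The evolution systems `R i` are eventually bounded by `K` and converge strongly to the identity
along `l`, uniformly on the parameter domain. This is how `R^{(λ)}` behaves as `λ → 0`. -/
structure EvolTendstoOne (T K : ℝ) (l : Filter α) (R : α → ℝ → ℝ → E →L[ℝ] E) : Prop where
  isEvolutionSystem : ∀ i, IsEvolutionSystem T (R i)
  eventually_norm_le : ∀ᶠ i in l, ∀ p ∈ evolDomain T, ‖R i p.1 p.2‖ ≤ K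
  tendstoUniformlyOn : ∀ x,
    TendstoUniformlyOn (fun i p => R i p.1 p.2 x) (fun _ => x) l (evolDomain T)

theorem evolTendstoOne_of_isDeterminedEvolSystem [CompleteSpace E] (hι : DenseRange ι)
    {B : ℝ → V →L[ℝ] E} (hB : ContinuousOn B (Icc 0 T)) {lam w : α → ℝ}
    (hlam : Tendsto lam l (𝓝 0)) (hw : Tendsto w l (𝓝 0))
    (hR : ∀ i, IsDeterminedEvolSystem ι T (fun s => lam i • B s) M (w i) (R i)) :
    EvolTendstoOne T (M * Real.exp T) l R := by
  have hK : ∀ᶠ i in l, ∀ p ∈ evolDomain T, ‖R i p.1 p.2‖ ≤ M * Real.exp T := by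
    have hw_abs : ∀ᶠ i in l, |w i| < 1 := hw.abs.eventually_lt_const (by simp)
    filter_upwards [hw_abs] with i hi p hp using (hR i).norm_le_s15 hi.le hp
  refine ⟨fun i => (hR i).1, hK, fun x => tendsto_prod_principal_iff.1 ?_⟩
  refine tendsto_apply_of_denseRange (L := fun q : α × ℝ × ℝ => R q.1 q.2.1 q.2.2)
    (P := ContinuousLinearMap.id ℝ E) (eventually_prod_principal_iff.2 hK) hι (fun v => ?_) x
  have hBv : ContinuousOn (fun s => B s v) (Icc 0 T) := hB.clm_apply continuousOn_const
  obtain ⟨C, hC⟩ := isCompact_Icc.exists_bound_of_continuousOn hBv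
  have hbound : Tendsto (fun i => M * Real.exp T * (|lam i| * C) * T) l (𝓝 0) := by
    simpa using ((hlam.abs.mul_const C).const_mul (M * Real.exp T)).mul_const T
  refine tendsto_iff_norm_sub_tendsto_zero.2 (squeeze_zero' (Eventually.of_forall fun _ =>
    norm_nonneg _) (eventually_prod_principal_iff.2 ?_) (hbound.comp tendsto_fst))
  filter_upwards [hK] with i hKi
  rintro ⟨t, s⟩ ⟨hs, hst, ht⟩
  dsimp only at hs hst ht
  have hC₀ : 0 ≤ C := (norm_nonneg _).trans (hC s ⟨hs, hst.trans ht⟩)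
  calc ‖R i t s (ι v) - ι v‖
      = ‖∫ r in s..t, R i t r ((lam i • B r) v)‖ := by
        rw [(hR i).integral_apply hKi (hBv.const_smul (lam i)) hs hst ht]
    _ ≤ M * Real.exp T * (|lam i| * C) * T := by
        refine norm_integral_evol_apply_le hKi (by positivity) hs hst ht fun r hr => ?_
        rw [smul_apply, norm_smul, Real.norm_eq_abs]
        gcongr
        exact hC r ⟨hs.trans hr.1, hr.2.le.trans ht⟩

namespace EvolTendstoOne

variable {lam : α → ℝ} {F : ℝ → E → E} {x : α → E} {x₀ : E} {u : α → ℝ → E}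

theorem tendstoUniformlyOn_apply (hR : EvolTendstoOne T K l R) (hx : Tendsto x l (𝓝 x₀)) :
    TendstoUniformlyOn (fun i p => R i p.1 p.2 (x i)) (fun _ => x₀) l (evolDomain T) :=
  tendsto_prod_principal_iff.1 <|
    tendsto_apply_of_eventually_norm_le (L := fun q : α × ℝ × ℝ => R q.1 q.2.1 q.2.2)
      (eventually_prod_principal_iff.2 hR.eventually_norm_le)
      (tendsto_prod_principal_iff.2 (hR.tendstoUniformlyOn x₀)) (hx.comp tendsto_fst)

theorem tendsto_integral [l.IsCountablyGenerated] (hR : EvolTendstoOne T K l R) (hT : 0 ≤ T)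
    {g : α → ℝ → E} {g₀ : ℝ → E} {C : ℝ} (hg : ∀ i, ContinuousOn (g i) (Icc 0 T))
    (hC : ∀ᶠ i in l, ∀ s ∈ Icc 0 T, ‖g i s‖ ≤ C)
    (hlim : ∀ s ∈ Icc 0 T, Tendsto (fun i => g i s) l (𝓝 (g₀ s))) :
    Tendsto (fun i => ∫ s in (0 : ℝ)..T, R i T s (g i s)) l (𝓝 (∫ s in (0 : ℝ)..T, g₀ s)) := by
  have hsub : uIoc 0 T ⊆ Icc 0 T := uIoc_of_le hT ▸ Ioc_subset_Icc_self
  refine intervalIntegral.tendsto_integral_filter_of_dominated_convergence (fun _ => K * C)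
    ?_ ?_ intervalIntegrable_const ?_
  · filter_upwards [hR.eventually_norm_le] with i hKi
    exact (((hR.isEvolutionSystem i).continuousOn_apply hKi le_rfl (hg i)).mono
      hsub).aestronglyMeasurable measurableSet_uIoc
  · filter_upwards [hR.eventually_norm_le, hC] with i hKi hCi
    refine Eventually.of_forall fun s hs => ?_
    have hs' := hsub hs
    exact (R i T s).le_of_opNorm_le_of_le (hKi (T, s) ⟨hs'.1, hs'.2, le_rfl⟩) (hCi s hs')
  · exact Eventually.of_forall fun s hs =>
      tendsto_apply_of_eventually_norm_le (L := fun i => R i T s)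
        (hR.eventually_norm_le.mono fun i hKi => hKi (T, s) ⟨(hsub hs).1, (hsub hs).2, le_rfl⟩)
        ((hR.tendstoUniformlyOn (g₀ s)).tendsto_at (x := (T, s))
          ⟨(hsub hs).1, (hsub hs).2, le_rfl⟩)
        (hlim s (hsub hs))

/-- A bootstrap: while `u i` stays in a ball around `x₀` on which `F` is bounded, its distance to
`x₀` is controlled by `λ`, so it never reaches the boundary of the ball. -/
theorem tendstoUniformlyOn_isMildSolution (hR : EvolTendstoOne T K l R)
    (hF : ContinuousOn (fun p : ℝ × E => F p.1 p.2) (Icc 0 T ×ˢ univ))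
    (hlam : Tendsto lam l (𝓝 0)) (hx : Tendsto x l (𝓝 x₀))
    (hu : ∀ i, IsMildSolution T (R i) (lam i) F (x i) (u i)) :
    TendstoUniformlyOn u (fun _ => x₀) l (Icc 0 T) := by
  obtain ⟨C, hC₀, hC⟩ := exists_eventually_forall_norm_le isCompact_Icc hF x₀
  obtain ⟨r, hr, hCr⟩ := Metric.eventually_nhds_iff.1 hC
  have hsmall : Tendsto (fun i => |lam i| * (K * C * T)) l (𝓝 0) := by
    simpa using hlam.abs.mul_const (K * C * T)
  refine Metric.tendstoUniformlyOn_iff.2 fun ε hε => ?_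
  set δ := min ε r
  have hδ : 0 < δ / 2 := half_pos (lt_min hε hr)
  filter_upwards [hR.eventually_norm_le, hsmall.eventually_lt_const hδ,
    Metric.tendstoUniformlyOn_iff.1 (hR.tendstoUniformlyOn_apply hx) _ hδ] with i hKi hi hRi
  have hlt : ∀ t ∈ Icc 0 T, dist (u i t) x₀ < δ := by
    refine forall_mem_Icc_lt_of_forall_mem_Ico_lt
      ((continuous_id.dist continuous_const).comp_continuousOn (hu i).continuousOn)
      fun t ht hδt => ?_
    have hFC : ∀ s ∈ Ico 0 t, ‖F s (u i s)‖ ≤ C := fun s hs =>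
      hCr ((hδt s hs).trans_le (min_le_right _ _)) s ⟨hs.1, hs.2.le.trans ht.2⟩
    calc dist (u i t) x₀ ≤ dist (u i t) (R i t 0 (x i)) + dist (R i t 0 (x i)) x₀ :=
          dist_triangle ..
      _ < δ / 2 + δ / 2 := by
          rw [dist_eq_norm, dist_comm]
          exact add_lt_add (((hu i).norm_sub_le hKi ht hC₀ hFC).trans_lt hi)
            (hRi (t, 0) ⟨le_rfl, ht.1, ht.2⟩)
      _ = δ := add_halves δ
  intro t ht
  rw [dist_comm]
  exact (hlt t ht).trans_le (min_le_left _ _)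

theorem tendsto_integral_isMildSolution [l.IsCountablyGenerated] (hR : EvolTendstoOne T K l R)
    (hT : 0 ≤ T) (hF : ContinuousOn (fun p : ℝ × E => F p.1 p.2) (Icc 0 T ×ˢ univ))
    (hlam : Tendsto lam l (𝓝 0)) (hx : Tendsto x l (𝓝 x₀))
    (hu : ∀ i, IsMildSolution T (R i) (lam i) F (x i) (u i)) :
    Tendsto (fun i => ∫ s in (0 : ℝ)..T, R i T s (F s (u i s))) l
      (𝓝 (∫ s in (0 : ℝ)..T, F s x₀)) := by
  have hux := hR.tendstoUniformlyOn_isMildSolution hF hlam hx hu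
  obtain ⟨C, -, hC⟩ := exists_eventually_forall_norm_le isCompact_Icc hF x₀
  obtain ⟨r, hr, hCr⟩ := Metric.eventually_nhds_iff.1 hC
  refine hR.tendsto_integral hT (C := C) (fun i => ?_) ?_ fun s hs => ?_
  · exact hF.comp (f := fun s => (s, u i s)) (continuousOn_id.prodMk (hu i).continuousOn)
      fun s hs => ⟨hs, mem_univ _⟩
  · filter_upwards [Metric.tendstoUniformlyOn_iff.1 hux r hr] with i hi s hs
    exact hCr (dist_comm x₀ (u i s) ▸ hi s hs) s hs
  · have hFs : Continuous fun y => F s y :=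
      hF.comp_continuous (f := fun y => (s, y)) (by fun_prop) fun y => ⟨hs, mem_univ _⟩
    exact (hFs.tendsto x₀).comp (hux.tendsto_at hs)

end EvolTendstoOne

end VanishingParameter

section Averaging

variable {α : Type*} {l : Filter α} [l.IsCountablyGenerated] {T K : ℝ}
  {R : α → ℝ → ℝ → E →L[ℝ] E} {lam : α → ℝ}

theorem timeAvg_apply {A : HypData E V} (hT : 0 ≤ T) (hA : ContinuousOn A.bdd (Icc 0 T)) (v : V) :
    timeAvg T A v = (1 / T) • ∫ s in (0 : ℝ)..T, A.bdd s v := by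
  rw [timeAvg, smul_apply,
    ContinuousLinearMap.intervalIntegral_apply (hA.intervalIntegrable_of_Icc hT)]

theorem EvolTendstoOne.mem_extendedLimit_of_periodic (hR : EvolTendstoOne T K l R) (hT : 0 ≤ T)
    {F : ℝ → E → E} (hF : ContinuousOn (fun p : ℝ × E => F p.1 p.2) (Icc 0 T ×ˢ univ))
    (hlam : Tendsto lam l (𝓝 0)) (hlam₀ : ∀ i, lam i ≠ 0) {x : α → E} {x₀ : E}
    (hx : Tendsto x l (𝓝 x₀)) {u : α → ℝ → E}
    (hu : ∀ i, IsMildSolution T (R i) (lam i) F (x i) (u i)) (hper : ∀ i, u i T = x i) :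
    (x₀, -((1 / T) • ∫ τ in (0 : ℝ)..T, F τ x₀)) ∈
      extendedLimit l fun i => (lam i * T)⁻¹ • (R i T 0 - 1) := by
  refine ⟨x, hx, ?_⟩
  refine ((hR.tendsto_integral_isMildSolution hT hF hlam hx hu).const_smul (1 / T)).neg.congr
    fun i => ?_
  have hperiod : R i T 0 (x i) - x i = -(lam i • ∫ s in (0 : ℝ)..T, R i T s (F s (u i s))) := by
    have hmild := (hu i).eq_add_integral T ⟨hT, le_rfl⟩
    rw [hper i] at hmild
    nth_rw 2 [hmild]
    abel
  change _ = (lam i * T)⁻¹ • (R i T 0 (x i) - x i)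
  rw [hperiod, smul_neg, smul_smul, mul_inv, mul_right_comm, inv_mul_cancel₀ (hlam₀ i), one_mul,
    one_div]

theorem EvolTendstoOne.timeAvg_mem_extendedLimit [CompleteSpace E] (hR : EvolTendstoOne T K l R)
    (hT : 0 ≤ T) {A : HypData E V} (hA : ContinuousOn A.bdd (Icc 0 T)) (hlam₀ : ∀ i, lam i ≠ 0)
    {M : ℝ} {w : α → ℝ}
    (hRA : ∀ i, IsDeterminedEvolSystem ι T (fun s => lam i • A.bdd s) M (w i) (R i))
    (v : V) : (ι v, timeAvg T A v) ∈ extendedLimit l fun i => (lam i * T)⁻¹ • (R i T 0 - 1) := by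
  have hAv : ContinuousOn (fun s => A.bdd s v) (Icc 0 T) := hA.clm_apply continuousOn_const
  obtain ⟨C, hC⟩ := isCompact_Icc.exists_bound_of_continuousOn hAv
  have hint := hR.tendsto_integral hT (g := fun _ s => A.bdd s v) (fun _ => hAv)
    (Eventually.of_forall fun _ => hC) fun _ _ => tendsto_const_nhds
  refine ⟨fun _ => ι v, tendsto_const_nhds, ?_⟩
  dsimp only
  rw [timeAvg_apply hT hA]
  refine (hint.const_smul (1 / T)).congr' ?_
  filter_upwards [hR.eventually_norm_le] with i hKi
  have hduhamel : R i T 0 (ι v) - ι v = lam i • ∫ s in (0 : ℝ)..T, R i T s (A.bdd s v) := by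
    rw [← (hRA i).integral_apply hKi (hAv.const_smul (lam i)) le_rfl hT le_rfl,
      ← intervalIntegral.integral_smul]
    simp only [smul_apply, map_smul]
  change _ = (lam i * T)⁻¹ • (R i T 0 (ι v) - ι v)
  rw [hduhamel, smul_smul, mul_inv, mul_right_comm, inv_mul_cancel₀ (hlam₀ i), one_mul, one_div]

end Averaging

theorem statement_15_general [CompleteSpace E] (hι : DenseRange ι) {T : ℝ} (hT : 0 < T)
    {A : HypData E V} {ω : ℝ} (hA : ContinuousOn A.bdd (Icc 0 T)) (hrange : Hyp4 ι T A ω)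
    {F : ℝ → E → E} (hF : ContinuousOn (fun p : ℝ × E => F p.1 p.2) (Icc 0 T ×ˢ univ))
    {α : Type*} {l : Filter α} [l.NeBot] [l.IsCountablyGenerated] {lam : α → ℝ}
    (hlam_pos : ∀ i, 0 < lam i) (hlam : Tendsto lam l (𝓝 0)) {R : α → ℝ → ℝ → E →L[ℝ] E}
    (hR : ∀ i, IsDeterminedEvolSystem ι T (fun s => lam i • A.bdd s) 1 (-(lam i * ω)) (R i))
    {x : α → E} {x₀ : E} (hx : Tendsto x l (𝓝 x₀)) {u : α → ℝ → E}
    (hu : ∀ i, IsMildSolution T (R i) (lam i) F (x i) (u i)) (hper : ∀ i, u i T = x i)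
    {f : E → E} (hf : ∀ v, f (ι v) = timeAvg T A v)
    {D' : Set E} {A' : E → E} (hclos : IsClosureOf D' A' (range ι) f) :
    x₀ ∈ D' ∧ A' x₀ + (1 / T) • (∫ τ in (0 : ℝ)..T, F τ x₀) = 0 := by
  obtain ⟨μ₀, hμ₀, hdense⟩ := hrange
  have hlam₀ : ∀ i, lam i ≠ 0 := fun i => (hlam_pos i).ne'
  have hgrowth : Tendsto (fun i => -(lam i * ω)) l (𝓝 0) := by simpa using (hlam.mul_const ω).neg
  have hone := evolTendstoOne_of_isDeterminedEvolSystem hι hA hlam hgrowth hR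
  have hperiod : ∀ i, ‖R i T 0‖ ≤ Real.exp (-ω * (lam i * T)) := fun i =>
    ((hR i).2.1 0 T le_rfl hT.le le_rfl).trans_eq (by ring_nf)
  have hdiss := isQuasiDissipative_extendedLimit_smul_sub_one hperiod
    (fun i => mul_pos (hlam_pos i) hT) (by simpa using hlam.mul_const T)
  have hmem := hone.mem_extendedLimit_of_periodic hT.le hF hlam hlam₀ hx hu hper
  obtain ⟨hx₀, hA'⟩ := hclos.mem_and_eq_of_isQuasiDissipative hf hι hμ₀ hdense hdiss
    (hone.timeAvg_mem_extendedLimit hT.le hA hlam₀ hR) hmem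
  exact ⟨hx₀, by rw [hA', neg_add_cancel]⟩

/-- Theorem 2: every branching point `x₀` of the parameterized periodic
problems `(P_{T,λ})` satisfies `Âx₀ + F̂(x₀) = 0`, where `Â` is the closure of the averaged
operator `A₀` and `F̂(x) = (1/T)∫₀ᵀ F(τ,x)dτ`. -/
theorem statement_15
    {E : Type*} [NormedAddCommGroup E] [NormedSpace ℝ E] [CompleteSpace E]
    [TopologicalSpace.SeparableSpace E]
    {V : Type*} [NormedAddCommGroup V] [NormedSpace ℝ V] [CompleteSpace V]
    (ι : V →L[ℝ] E) (hιinj : Function.Injective ι) (hιdense : DenseRange ι)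
    (T : ℝ) (hT : 0 < T)
    (A : HypData E V) (ω MV ωV : ℝ)
    (hgen : HypGen T A)
    (h1 : Hyp1' T A ω)
    (h2 : Hyp2 ι T A MV ωV)
    (h3 : Hyp3 ι T A)
    (h4 : Hyp4 ι T A ω)
    (h5 : Hyp5 T A)
    -- the nonlinearity `F` and conditions (F1)–(F4)
    (F : ℝ → E → E)
    (hFc : ContinuousOn (fun p : ℝ × E => F p.1 p.2) (Icc (0 : ℝ) T ×ˢ (univ : Set E)))
    (hF1 : ∀ x : E, ∃ r > (0 : ℝ), ∃ Lc > (0 : ℝ), ∀ t ∈ Icc (0 : ℝ) T,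
      ∀ x₁ ∈ Metric.ball x r, ∀ x₂ ∈ Metric.ball x r, ‖F t x₁ - F t x₂‖ ≤ Lc * ‖x₁ - x₂‖)
    (c : ℝ) (hc : 0 < c)
    (hF2 : ∀ t ∈ Icc (0 : ℝ) T, ∀ x : E, ‖F t x‖ ≤ c * (1 + ‖x‖))
    (k : ℝ) (hk0 : 0 ≤ k) (hkω : k < ω)
    (hF3 : ∀ Q : Set E, Bornology.IsBounded Q →
      hausdorffMNC {y : E | ∃ t ∈ Icc (0 : ℝ) T, ∃ x ∈ Q, y = F t x} ≤ k * hausdorffMNC Q)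
    (hF4 : ∀ x : E, F 0 x = F T x)
    -- `RR lam` is the evolution system determined by `{λA(t)}`
    (RR : ℝ → ℝ → ℝ → E →L[ℝ] E)
    (hRR : ∀ lam > (0 : ℝ),
      IsDeterminedEvolSystem ι T (fun s => lam • A.bdd s) 1 (-(lam * ω)) (RR lam))
    -- `x₀` is a branching point: `T`-periodic points `(xₙ, λₙ)` with `λₙ → 0⁺`, `xₙ → x₀`
    (x0 : E) (xn : ℕ → E) (ln : ℕ → ℝ) (un : ℕ → ℝ → E)
    (hlnpos : ∀ n, 0 < ln n) (hln : Tendsto ln atTop (𝓝 0))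
    (hxn : Tendsto xn atTop (𝓝 x0))
    (hmild : ∀ n, ContinuousOn (un n) (Icc (0 : ℝ) T) ∧
      (∀ t ∈ Icc (0 : ℝ) T, un n t =
        RR (ln n) t 0 (xn n) + ln n • ∫ s in (0 : ℝ)..t, RR (ln n) t s (F s (un n s))) ∧
      un n T = xn n)
    -- `f` represents `A₀` with domain `ι(V)` and `(D',A')` is its closure `Â`
    (f : E → E) (hf : ∀ v : V, f (ι v) = timeAvg T A v)
    (D' : Set E) (A' : E → E) (hclos : IsClosureOf D' A' (Set.range ι) f) :
    x0 ∈ D' ∧ A' x0 + (1 / T) • (∫ τ in (0 : ℝ)..T, F τ x0) = 0 :=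
  statement_15_general hιdense hT h3.2 h4 hFc hlnpos hln (fun n => hRR (ln n) (hlnpos n)) hxn
    (fun n => ⟨(hmild n).1, (hmild n).2.1⟩) (fun n => (hmild n).2.2) hf hclos
end
end
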